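/- arXiv:1801.07982 — 4 statements merged into one kernel-verified Lean document; each statement's English description precedes it below -/
import Mathlib

section
/- Let A be a finite set of nonzero rational numbers with -1 ∉ A, let K be a positive integer with |AA| ≤ K|A|, and let k ≥ 2 be an integer. Then for every subset A' ⊆ A, the multiplicative energy of order k of the shifted subset satisfies E_k(A'+1) ≤ (8k^4)^{kK} |A'|^k. -/
open Finset Pointwise

/-- The multiplicative energy of order `k` of a finite set `B ⊆ ℚ`: the number of
`2k`-tuples `(b₁, …, b_{2k}) ∈ B^{2k}` with `b₁ ⋯ b_k = b_{k+1} ⋯ b_{2k}`. -/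
def multEnergy (k : ℕ) (B : Finset ℚ) : ℕ :=
  (((Fintype.piFinset fun _ : Fin k => B) ×ˢ
      (Fintype.piFinset fun _ : Fin k => B)).filter
      (fun fg => ∏ i, fg.1 i = ∏ i, fg.2 i)).card

/-! ### Fourier analysis of multiplicative energies -/

/-- Solutions of `∏ f (inl i) = ∏ f (inr i)` with the coordinate `s` of `f` in `S s`. -/
def prodSolutions (k : ℕ) (S : Fin k ⊕ Fin k → Finset ℚ) : Finset (Fin k ⊕ Fin k → ℚ) :=
  (Fintype.piFinset S).filter fun f => ∏ i, f (Sum.inl i) = ∏ i, f (Sum.inr i)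

lemma multEnergy_eq_card_prodSolutions (k : ℕ) (B : Finset ℚ) :
    multEnergy k B = (prodSolutions k fun _ => B).card := by
  refine (Finset.card_equiv (Equiv.sumArrowEquivProdArrow (Fin k) (Fin k) ℚ) fun f => ?_).symm
  simp [prodSolutions, Equiv.sumArrowEquivProdArrow]

lemma exists_intCast_eq_natCast_mul (T : Finset ℚ) :
    ∃ (N : ℕ) (n : ℚ → ℤ), N ≠ 0 ∧ ∀ t ∈ T, (n t : ℚ) = N * t := by
  refine ⟨∏ t ∈ T, t.den, fun t => ((∏ t ∈ T, t.den : ℕ) * t : ℚ).num, ?_, fun t ht => ?_⟩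
  · exact Finset.prod_ne_zero_iff.2 fun t _ => t.den_ne_zero
  · obtain ⟨m, hm⟩ := Finset.dvd_prod_of_mem (fun t : ℚ => t.den) ht
    have : ((∏ t ∈ T, t.den : ℕ) * t : ℚ) = ((m * t.num : ℤ) : ℚ) := by
      rw [hm]
      push_cast
      rw [mul_comm (t.den : ℚ), mul_assoc, Rat.den_mul_eq_num]
    simp only [this, Rat.num_intCast]

/-- Orthogonality of the functions `e t` on `k`-fold products from `T`. -/
def DetectsProducts {X : Type} [Fintype X] (k : ℕ) (T : Finset ℚ) (e : ℚ → X → ℂ) : Prop :=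
  ∀ f g : Fin k → ℚ, (∀ i, f i ∈ T) → (∀ i, g i ∈ T) →
    ∑ x, (∏ i, e (f i) x) * star (∏ i, e (g i) x) =
      if ∏ i, f i = ∏ i, g i then (Fintype.card X : ℂ) else 0

/-- A finite family of characters detecting all relations `∏ f = ∏ g` between elements of a finite
set of nonzero rationals: Dirichlet characters to a large prime modulus. -/
lemma exists_orthogonal_characters (k : ℕ) (T : Finset ℚ) (hT : (0 : ℚ) ∉ T) :
    ∃ (X : Type) (_ : Fintype X) (_ : Nonempty X) (e : ℚ → X → ℂ),
      DetectsProducts k T e := by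
  obtain ⟨N, n, hN, hn⟩ := exists_intCast_eq_natCast_mul T
  set P : Finset (Fin k → ℚ) := Fintype.piFinset fun _ => T with hP
  set L : ℕ := ∑ t ∈ T, (n t).natAbs +
    ∑ x ∈ P ×ˢ P, (∏ i, n (x.1 i) - ∏ i, n (x.2 i)).natAbs with hL
  obtain ⟨q, hqL, hq⟩ := Nat.exists_infinite_primes (L + 1)
  have : Fact q.Prime := ⟨hq⟩
  have hn0 : ∀ t ∈ T, ((n t : ℤ) : ZMod q) ≠ 0 := by
    intro t ht h
    rw [ZMod.intCast_zmod_eq_zero_iff_dvd] at h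
    have h1 : (n t).natAbs ≤ L := (Finset.single_le_sum (f := fun t => (n t).natAbs)
      (fun _ _ => Nat.zero_le _) ht).trans (Nat.le_add_right _ _)
    have h2 : n t = 0 := Int.eq_zero_of_abs_lt_dvd h (by rw [Int.abs_eq_natAbs]; omega)
    have h3 := hn t ht
    rw [h2] at h3
    have : (N : ℚ) * t = 0 := by simpa using h3.symm
    rcases mul_eq_zero.1 this with h | h
    · exact hN (by exact_mod_cast h)
    · exact hT (h ▸ ht)
  have hcard : Fintype.card (DirichletCharacter ℂ q) = q.totient := by
    rw [← Nat.card_eq_fintype_card, DirichletCharacter.card_eq_totient_of_hasEnoughRootsOfUnity]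
  refine ⟨DirichletCharacter ℂ q, inferInstance, inferInstance,
    fun t χ => χ ((n t : ℤ) : ZMod q), fun f g hf hg => ?_⟩
  have hu : IsUnit (∏ i, ((n (g i) : ℤ) : ZMod q)) :=
    isUnit_iff_ne_zero.2 (Finset.prod_ne_zero_iff.2 fun i _ => hn0 _ (hg i))
  have key : ((∏ i, ((n (g i) : ℤ) : ZMod q)) = ∏ i, ((n (f i) : ℤ) : ZMod q)) ↔
      ∏ i, f i = ∏ i, g i := by
    have hcast : ∀ f : Fin k → ℚ, (∀ i, f i ∈ T) →
        ((∏ i, n (f i) : ℤ) : ℚ) = (N : ℚ) ^ k * ∏ i, f i := by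
      intro f hf
      push_cast
      rw [Finset.prod_congr rfl fun i _ => hn _ (hf i), Finset.prod_mul_distrib]
      simp
    have hNk : (N : ℚ) ^ k ≠ 0 := pow_ne_zero _ (by exact_mod_cast hN)
    rw [← mul_right_inj' hNk (b := ∏ i, f i), ← hcast f hf, ← hcast g hg, Int.cast_inj]
    constructor
    · intro h
      have hd : (q : ℤ) ∣ ∏ i, n (f i) - ∏ i, n (g i) := by
        rw [← ZMod.intCast_zmod_eq_zero_iff_dvd]
        push_cast
        rw [h, sub_self]
      have hmem : (f, g) ∈ P ×ˢ P := by simp [hP, hf, hg]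
      have h1 : (∏ i, n (f i) - ∏ i, n (g i)).natAbs ≤ L :=
        (Finset.single_le_sum
          (f := fun x : (Fin k → ℚ) × (Fin k → ℚ) => (∏ i, n (x.1 i) - ∏ i, n (x.2 i)).natAbs)
          (fun _ _ => Nat.zero_le _) hmem).trans (Nat.le_add_left _ _)
      exact sub_eq_zero.1 (Int.eq_zero_of_abs_lt_dvd hd (by rw [Int.abs_eq_natAbs]; omega))
    · intro h
      have := congrArg (Int.cast : ℤ → ZMod q) h
      push_cast at this
      exact this.symm
  have hsum := DirichletCharacter.sum_char_inv_mul_char_eq ℂ hu (∏ i, ((n (f i) : ℤ) : ZMod q))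
  simp only [key, ← hcard] at hsum
  rw [← hsum]
  refine Finset.sum_congr rfl fun χ _ => ?_
  rw [← map_prod, ← map_prod, MulChar.star_apply', MulChar.inv_apply', mul_comm]

section CharacterSums

variable {X : Type} [Fintype X] {e : ℚ → X → ℂ} {k : ℕ} {T : Finset ℚ}

lemma card_mul_card_prodSolutions (he : DetectsProducts k T e)
    (S : Fin k ⊕ Fin k → Finset ℚ) (hS : ∀ s, S s ⊆ T) :
    (Fintype.card X : ℂ) * (prodSolutions k S).card =
      ∑ x, (∏ i, ∑ a ∈ S (Sum.inl i), e a x) * ∏ i, star (∑ a ∈ S (Sum.inr i), e a x) := by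
  have h1 : ∀ x, (∏ i, ∑ a ∈ S (Sum.inl i), e a x) * ∏ i, star (∑ a ∈ S (Sum.inr i), e a x) =
      ∑ f ∈ Fintype.piFinset S,
        (∏ i, e (f (Sum.inl i)) x) * star (∏ i, e (f (Sum.inr i)) x) := by
    intro x
    have := Finset.prod_univ_sum S
      (fun s a => Sum.elim (fun _ : Fin k => e a x) (fun _ : Fin k => star (e a x)) s)
    simpa [Fintype.prod_sum_type] using this
  simp_rw [h1]
  rw [Finset.sum_comm, Finset.sum_congr rfl fun f hf => he (fun i => f (Sum.inl i))
    (fun i => f (Sum.inr i)) (fun i => hS _ (Fintype.mem_piFinset.1 hf _))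
    (fun i => hS _ (Fintype.mem_piFinset.1 hf _))]
  rw [← Finset.sum_filter, Finset.sum_const, nsmul_eq_mul, mul_comm]
  rfl

lemma card_mul_card_prodSolutions_le (he : DetectsProducts k T e)
    (S : Fin k ⊕ Fin k → Finset ℚ) (hS : ∀ s, S s ⊆ T) :
    (Fintype.card X : ℝ) * (prodSolutions k S).card ≤ ∑ x, ∏ s, ‖∑ a ∈ S s, e a x‖ := by
  have h := congrArg norm (card_mul_card_prodSolutions he S hS)
  rw [norm_mul, Complex.norm_natCast, Complex.norm_natCast] at h
  rw [h]
  refine (norm_sum_le _ _).trans (Finset.sum_le_sum fun x _ => ?_)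
  rw [norm_mul, norm_prod, norm_prod, Fintype.prod_sum_type]
  simp only [norm_star, le_refl]

lemma card_mul_multEnergy (he : DetectsProducts k T e) {B : Finset ℚ} (hB : B ⊆ T) :
    (Fintype.card X : ℝ) * multEnergy k B = ∑ x, (‖∑ a ∈ B, e a x‖ ^ 2) ^ k := by
  have h := card_mul_card_prodSolutions he (fun _ => B) fun _ => hB
  rw [multEnergy_eq_card_prodSolutions]
  apply Complex.ofReal_injective
  push_cast
  rw [h]
  refine Finset.sum_congr rfl fun x _ => ?_
  rw [Finset.prod_const, Finset.prod_const, ← mul_pow, Finset.card_univ, Fintype.card_fin]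
  congr 1
  rw [RCLike.star_def, Complex.mul_conj, Complex.normSq_eq_norm_sq]
  push_cast
  rfl

lemma sum_mul_pow_le_of_sum_pow_le (hk : 2 ≤ k) {u v : X → ℝ} (hu : ∀ x, 0 ≤ u x)
    (hv : ∀ x, 0 ≤ v x) {U V : ℝ} (hU : 0 ≤ U) (hV : 0 ≤ V) (hUk : ∑ x, u x ^ k ≤ U ^ k)
    (hVk : ∑ x, v x ^ k ≤ V ^ k) : ∑ x, u x * v x ^ (k - 1) ≤ U * V ^ (k - 1) := by
  have hk1 : (1 : ℝ) < k := by exact_mod_cast hk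
  have hk0 : (k : ℝ) ≠ 0 := by positivity
  have hcast : ((k - 1 : ℕ) : ℝ) = (k : ℝ) - 1 := by
    rw [Nat.cast_sub (by omega), Nat.cast_one]
  have hpq := Real.HolderConjugate.conjExponent hk1
  have h := Real.inner_le_Lp_mul_Lq_of_nonneg Finset.univ hpq (f := u)
    (g := fun x => v x ^ (k - 1)) (fun x _ => hu x) (fun x _ => pow_nonneg (hv x) _)
  have hq : Real.conjExponent (k : ℝ) = k / (k - 1) := rfl
  have hv' : ∀ x, (v x ^ (k - 1)) ^ Real.conjExponent (k : ℝ) = v x ^ k := by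
    intro x
    rw [← Real.rpow_natCast, ← Real.rpow_mul (hv x), hcast, hq,
      mul_div_cancel₀ _ (by linarith : (k : ℝ) - 1 ≠ 0), Real.rpow_natCast]
  simp only [hv', Real.rpow_natCast] at h
  refine h.trans (mul_le_mul ?_ ?_ (Real.rpow_nonneg
    (Finset.sum_nonneg fun x _ => pow_nonneg (hv x) _) _) hU)
  · calc (∑ x, u x ^ k) ^ (1 / (k : ℝ)) ≤ (U ^ k) ^ (1 / (k : ℝ)) :=
          Real.rpow_le_rpow (Finset.sum_nonneg fun x _ => pow_nonneg (hu x) _) hUk (by positivity)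
      _ = U := by rw [one_div, Real.pow_rpow_inv_natCast hU (by omega)]
  · calc (∑ x, v x ^ k) ^ (1 / Real.conjExponent (k : ℝ))
          ≤ (V ^ k) ^ (1 / Real.conjExponent (k : ℝ)) :=
          Real.rpow_le_rpow (Finset.sum_nonneg fun x _ => pow_nonneg (hv x) _) hVk
            (one_div_nonneg.2 hpq.symm.nonneg)
      _ = V ^ (k - 1) := by
          rw [← Real.rpow_natCast, ← Real.rpow_mul hV, ← Real.rpow_natCast, hcast, hq]
          congr 1
          field_simp

/-- A set `B` has energy at most that of `C * #B` independent elements would suggest. -/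
def HasEnergyBound (k : ℕ) (C : ℝ) (B : Finset ℚ) : Prop :=
  (multEnergy k B : ℝ) ≤ (C * B.card) ^ k

lemma hasEnergyBound_of_sum_le [Nonempty X] (hk : 2 ≤ k) (he : DetectsProducts k T e)
    {β : Type*} [DecidableEq β] (j : ℚ → β) {B : Finset ℚ} (hB : B ⊆ T) {C M : ℝ} (hC : 0 ≤ C)
    (hM : 0 ≤ M) (hj : ∀ c, HasEnergyBound k C (B.filter fun b => j b = c))
    (hle : ∑ x, (‖∑ a ∈ B, e a x‖ ^ 2) ^ k ≤ M * ∑ c ∈ B.image j,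
      ∑ x, ‖∑ a ∈ B.filter (fun b => j b = c), e a x‖ ^ 2 * (‖∑ a ∈ B, e a x‖ ^ 2) ^ (k - 1)) :
    HasEnergyBound k (M * C) B := by
  have hk0 : k ≠ 0 := by omega
  have hX : (0 : ℝ) < Fintype.card X := by exact_mod_cast Fintype.card_pos
  obtain ⟨r, hr, hrk⟩ : ∃ r : ℝ, 0 ≤ r ∧ r ^ k = Fintype.card X :=
    ⟨_, Real.rpow_nonneg hX.le _, Real.rpow_inv_natCast_pow hX.le hk0⟩
  obtain ⟨E, hE, hEk⟩ : ∃ E : ℝ, 0 ≤ E ∧ E ^ k = multEnergy k B :=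
    ⟨_, Real.rpow_nonneg (Nat.cast_nonneg _) _, Real.rpow_inv_natCast_pow (Nat.cast_nonneg _) hk0⟩
  have hfiber : ∀ c, ∑ x, ‖∑ a ∈ B.filter (fun b => j b = c), e a x‖ ^ 2 *
      (‖∑ a ∈ B, e a x‖ ^ 2) ^ (k - 1) ≤
      (r * (C * (B.filter fun b => j b = c).card)) * (r * E) ^ (k - 1) := by
    intro c
    refine sum_mul_pow_le_of_sum_pow_le hk (fun x => by positivity) (fun x => by positivity)
      (by positivity) (by positivity) ?_ ?_
    · rw [← card_mul_multEnergy he ((Finset.filter_subset _ _).trans hB), mul_pow, hrk]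
      exact mul_le_mul_of_nonneg_left (hj c) hX.le
    · rw [← card_mul_multEnergy he hB, mul_pow, hrk, hEk]
  have hcard : ∑ c ∈ B.image j, ((B.filter fun b => j b = c).card : ℝ) = B.card := by
    rw [Finset.card_eq_sum_card_image j B]
    push_cast
    rfl
  have hmain : r ^ k * E ^ k ≤ r ^ k * ((M * C * B.card) * E ^ (k - 1)) := by
    rw [hrk, hEk, card_mul_multEnergy he hB, ← hrk]
    calc _ ≤ M * ∑ c ∈ B.image j,
          (r * (C * (B.filter fun b => j b = c).card)) * (r * E) ^ (k - 1) :=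
          hle.trans (mul_le_mul_of_nonneg_left (Finset.sum_le_sum fun c _ => hfiber c) hM)
      _ = _ := by
          rw [← Finset.sum_mul, ← Finset.mul_sum, ← Finset.mul_sum, hcard]
          obtain ⟨m, rfl⟩ : ∃ m, k = m + 1 := ⟨k - 1, by omega⟩
          simp only [Nat.add_sub_cancel]
          ring
  have hEle : E ≤ M * C * B.card := by
    rcases hE.eq_or_lt with h | h
    · rw [← h]; positivity
    · have h1 := le_of_mul_le_mul_left hmain (hrk ▸ hX)
      rw [← Nat.sub_add_cancel (show 1 ≤ k by omega), pow_succ, mul_comm,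
        Nat.add_sub_cancel] at h1
      exact le_of_mul_le_mul_right h1 (by positivity)
  unfold HasEnergyBound
  rw [← hEk]
  exact pow_le_pow_left₀ hE hEle k

end CharacterSums

section Splitting

variable {k : ℕ} {B : Finset ℚ} {C : ℝ}

/-- If every relation has two coordinates in the same fibre of `j`, then bounds for the fibres
give a bound for the whole set. -/
lemma HasEnergyBound.of_fibers (hk : 2 ≤ k) (hB : (0 : ℚ) ∉ B) (hC : 0 ≤ C)
    {β : Type*} [DecidableEq β] (j : ℚ → β)
    (hpair : ∀ f ∈ prodSolutions k (fun _ => B), ∃ s t, s ≠ t ∧ j (f s) = j (f t))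
    (hj : ∀ c, HasEnergyBound k C (B.filter fun b => j b = c)) :
    HasEnergyBound k (2 * (k : ℝ) ^ 2 * C) B := by
  obtain ⟨X, _, _, e, he⟩ := exists_orthogonal_characters k B hB
  refine hasEnergyBound_of_sum_le hk he j subset_rfl hC (by positivity) hj ?_
  set S : Finset (Fin k ⊕ Fin k) → β → Fin k ⊕ Fin k → Finset ℚ := fun P c s =>
    if s ∈ P then B.filter (fun b => j b = c) else B with hS
  set Q := (Finset.univ : Finset (Fin k ⊕ Fin k)).powersetCard 2 with hQ
  have hQcard : (Q.card : ℝ) ≤ 2 * (k : ℝ) ^ 2 := by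
    rw [hQ, Finset.card_powersetCard, Finset.card_univ, Fintype.card_sum, Fintype.card_fin,
      Nat.cast_choose_two]
    push_cast
    nlinarith [(Nat.cast_nonneg k : (0 : ℝ) ≤ k)]
  have hcover : prodSolutions k (fun _ => B) ⊆
      Q.biUnion fun P => (B.image j).biUnion fun c => prodSolutions k (S P c) := by
    intro f hf
    obtain ⟨s, t, hst, hjst⟩ := hpair f hf
    have hfB : ∀ s, f s ∈ B := Fintype.mem_piFinset.1 (Finset.mem_filter.1 hf).1
    simp only [Finset.mem_biUnion]
    refine ⟨{s, t}, ?_, j (f s), Finset.mem_image_of_mem _ (hfB s), ?_⟩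
    · rw [hQ, Finset.mem_powersetCard]
      exact ⟨Finset.subset_univ _, Finset.card_pair hst⟩
    · refine Finset.mem_filter.2 ⟨Fintype.mem_piFinset.2 fun r => ?_, (Finset.mem_filter.1 hf).2⟩
      simp only [hS]
      split_ifs with hr
      · rcases Finset.mem_insert.1 hr with rfl | hr
        · simp [hfB]
        · rw [Finset.mem_singleton.1 hr]
          simp [hfB, hjst]
      · exact hfB r
  have hcount : ((prodSolutions k (fun _ => B)).card : ℝ) ≤
      ∑ P ∈ Q, ∑ c ∈ B.image j, ((prodSolutions k (S P c)).card : ℝ) := by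
    exact_mod_cast (Finset.card_le_card hcover).trans (Finset.card_biUnion_le.trans
      (Finset.sum_le_sum fun P _ => Finset.card_biUnion_le))
  have hprod : ∀ P ∈ Q, ∀ c x, ∏ s, ‖∑ a ∈ S P c s, e a x‖ =
      ‖∑ a ∈ B.filter (fun b => j b = c), e a x‖ ^ 2 * (‖∑ a ∈ B, e a x‖ ^ 2) ^ (k - 1) := by
    intro P hP c x
    have hPc := (Finset.mem_powersetCard.1 hP).2
    have h1 : ∀ s, ‖∑ a ∈ S P c s, e a x‖ = if s ∈ P then
        ‖∑ a ∈ B.filter (fun b => j b = c), e a x‖ else ‖∑ a ∈ B, e a x‖ := by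
      intro s
      simp only [hS]
      split_ifs <;> rfl
    simp only [h1]
    rw [Finset.prod_ite, Finset.prod_const, Finset.prod_const, Finset.filter_univ_mem, hPc,
      Finset.filter_not, Finset.filter_univ_mem, Finset.card_sdiff_of_subset (Finset.subset_univ _),
      hPc, Finset.card_univ, Fintype.card_sum, Fintype.card_fin, ← pow_mul]
    congr 2
    omega
  calc ∑ x, (‖∑ a ∈ B, e a x‖ ^ 2) ^ k
      = Fintype.card X * (prodSolutions k (fun _ => B)).card := by
        rw [← card_mul_multEnergy he subset_rfl, multEnergy_eq_card_prodSolutions]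
    _ ≤ Fintype.card X * ∑ P ∈ Q, ∑ c ∈ B.image j, ((prodSolutions k (S P c)).card : ℝ) := by
        gcongr
    _ = ∑ P ∈ Q, ∑ c ∈ B.image j, Fintype.card X * ((prodSolutions k (S P c)).card : ℝ) := by
        simp only [Finset.mul_sum]
    _ ≤ ∑ P ∈ Q, ∑ c ∈ B.image j, ∑ x, ‖∑ a ∈ B.filter (fun b => j b = c), e a x‖ ^ 2 *
          (‖∑ a ∈ B, e a x‖ ^ 2) ^ (k - 1) := by
        refine Finset.sum_le_sum fun P hP => Finset.sum_le_sum fun c _ => ?_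
        refine (card_mul_card_prodSolutions_le he (S P c) fun s => ?_).trans_eq
          (Finset.sum_congr rfl fun x _ => hprod P hP c x)
        simp only [hS]
        split_ifs
        · exact Finset.filter_subset _ _
        · exact subset_rfl
    _ ≤ _ := by
        rw [Finset.sum_const, nsmul_eq_mul]
        refine mul_le_mul_of_nonneg_right hQcard (Finset.sum_nonneg fun c _ =>
          Finset.sum_nonneg fun x _ => by positivity)

lemma HasEnergyBound.of_split (hk : 2 ≤ k) (hB : (0 : ℚ) ∉ B) (hC : 0 ≤ C)
    (p : ℚ → Prop) [DecidablePred p] (h₁ : HasEnergyBound k C (B.filter p))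
    (h₂ : HasEnergyBound k C (B.filter fun b => ¬ p b)) : HasEnergyBound k (2 * C) B := by
  obtain ⟨X, _, _, e, he⟩ := exists_orthogonal_characters k B hB
  have hfib : ∀ c : Bool, B.filter (fun b => decide (p b) = c) =
      if c then B.filter p else B.filter fun b => ¬ p b := by
    intro c; cases c <;> simp
  refine hasEnergyBound_of_sum_le hk he (fun b => decide (p b)) subset_rfl hC (by norm_num) ?_ ?_
  · intro c
    rw [hfib]
    cases c
    · simpa using h₂
    · simpa using h₁
  · rw [Finset.sum_comm, Finset.mul_sum]
    refine Finset.sum_le_sum fun x _ => ?_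
    have hsq : ‖∑ a ∈ B, e a x‖ ^ 2 ≤ 2 * ∑ c ∈ B.image (fun b => decide (p b)),
        ‖∑ a ∈ B.filter (fun b => decide (p b) = c), e a x‖ ^ 2 := by
      have hext : ∑ c ∈ B.image (fun b => decide (p b)),
          ‖∑ a ∈ B.filter (fun b => decide (p b) = c), e a x‖ ^ 2 =
          ∑ c : Bool, ‖∑ a ∈ B.filter (fun b => decide (p b) = c), e a x‖ ^ 2 := by
        refine Finset.sum_subset (Finset.subset_univ _) fun c _ hc => ?_
        have hempty : B.filter (fun b => decide (p b) = c) = ∅ :=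
          Finset.filter_eq_empty_iff.2 fun b hb h => hc (Finset.mem_image.2 ⟨b, hb, h⟩)
        simp [hempty]
      rw [hext, Fintype.sum_bool, hfib, hfib]
      simp only [if_true, Bool.false_eq_true, if_false]
      rw [← Finset.sum_filter_add_sum_filter_not B p]
      have := norm_add_le (∑ a ∈ B.filter p, e a x) (∑ a ∈ B.filter (fun b => ¬ p b), e a x)
      refine (pow_le_pow_left₀ (norm_nonneg _) this 2).trans ?_
      nlinarith [sq_nonneg (‖∑ a ∈ B.filter p, e a x‖ - ‖∑ a ∈ B.filter (fun b => ¬ p b), e a x‖)]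
    calc (‖∑ a ∈ B, e a x‖ ^ 2) ^ k
        = ‖∑ a ∈ B, e a x‖ ^ 2 * (‖∑ a ∈ B, e a x‖ ^ 2) ^ (k - 1) := by
          rw [← pow_succ', Nat.sub_add_cancel (by omega)]
      _ ≤ _ := by
          rw [← Finset.sum_mul, ← mul_assoc]
          exact mul_le_mul_of_nonneg_right hsq (by positivity)

end Splitting

lemma HasEnergyBound.mono {k : ℕ} {B : Finset ℚ} {C D : ℝ} (hC : 0 ≤ C) (hCD : C ≤ D)
    (h : HasEnergyBound k C B) : HasEnergyBound k D B :=
  h.trans (pow_le_pow_left₀ (by positivity) (by gcongr) k)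

lemma multEnergy_le_card_pow_mul_card_pow (k : ℕ) (B : Finset ℚ) :
    multEnergy k B ≤ B.card ^ k * B.card ^ k := by
  refine (Finset.card_filter_le _ _).trans ?_
  simp

lemma hasEnergyBound_one_of_card_le_one (k : ℕ) {B : Finset ℚ} (hB : B.card ≤ 1) :
    HasEnergyBound k 1 B := by
  have h := (multEnergy_le_card_pow_mul_card_pow k B).trans
    (mul_le_of_le_one_right' (pow_le_one' hB k))
  unfold HasEnergyBound
  rw [one_mul]
  exact_mod_cast h

/-- Passing successively to subsets satisfying `R p` for all `p ∈ Q`, at a cost of `D` each. -/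
lemma hasEnergyBound_of_forall_restrict {ι : Type*} [DecidableEq ι] {k : ℕ} {D : ℝ} (hD : 0 ≤ D)
    (R : ι → Finset ℚ → Prop) (hR : ∀ p B B', B' ⊆ B → R p B → R p B') {T : Finset ℚ}
    (Q : Finset ι) (hstep : ∀ p ∈ Q, ∀ B ⊆ T, ∀ C : ℝ, 0 ≤ C →
      (∀ B' ⊆ B, R p B' → HasEnergyBound k C B') → HasEnergyBound k (D * C) B)
    {C : ℝ} (hC : 0 ≤ C) :
    ∀ B ⊆ T, (∀ B' ⊆ B, (∀ p ∈ Q, R p B') → HasEnergyBound k C B') →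
      HasEnergyBound k (D ^ Q.card * C) B := by
  induction Q using Finset.induction_on with
  | empty => intro B _ h; simpa using h B subset_rfl
  | insert p Q hp ih =>
    intro B hB h
    rw [Finset.card_insert_of_notMem hp, pow_succ', mul_assoc]
    refine hstep p (Finset.mem_insert_self _ _) B hB _ (by positivity) fun B' hB' hpB' => ?_
    refine ih (fun q hq => hstep q (Finset.mem_insert_of_mem hq)) B' (hB'.trans hB)
      fun B'' hB'' hQ => h B'' (hB''.trans hB') fun q hq => ?_
    rcases Finset.mem_insert.1 hq with rfl | hq
    · exact hR _ _ _ hB'' hpB'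
    · exact hQ q hq

/-! ### Minimal valuations in multiplicative relations -/

section Padic

variable {p : ℕ} [hp : Fact p.Prime]

lemma padicNorm_prod {ι : Type*} (s : Finset ι) (f : ι → ℚ) :
    padicNorm p (∏ i ∈ s, f i) = ∏ i ∈ s, padicNorm p (f i) :=
  map_prod (IsAbsoluteValue.toAbsoluteValue (padicNorm p)) f s

lemma padicNorm_one_add_of_one_lt {x : ℚ} (hx : 1 < padicNorm p x) :
    padicNorm p (1 + x) = padicNorm p x := by
  rw [padicNorm.add_eq_max_of_ne (by rw [padicNorm.one]; exact hx.ne), padicNorm.one,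
    max_eq_right hx.le]

lemma padicNorm_prod_one_add_sub_one_lt {ι : Type*} (s : Finset ι) (x : ι → ℚ) {r : ℚ}
    (hr : 0 < r) (hr1 : r ≤ 1) (hx : ∀ i ∈ s, padicNorm p (x i) < r) :
    padicNorm p (∏ i ∈ s, (1 + x i) - 1) < r := by
  classical
  induction s using Finset.induction_on with
  | empty => simpa using hr
  | insert a s ha ih =>
    have h1 := ih fun i hi => hx i (Finset.mem_insert_of_mem hi)
    have h2 := hx a (Finset.mem_insert_self _ _)
    rw [Finset.prod_insert ha]
    have h3 : (1 + x a) * ∏ i ∈ s, (1 + x i) - 1 =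
        x a + ((∏ i ∈ s, (1 + x i) - 1) + x a * (∏ i ∈ s, (1 + x i) - 1)) := by ring
    rw [h3]
    refine padicNorm.nonarchimedean.trans_lt (max_lt h2 ?_)
    refine padicNorm.nonarchimedean.trans_lt (max_lt h1 ?_)
    rw [padicNorm.mul]
    exact (mul_le_of_le_one_left (padicNorm.nonneg _) (h2.le.trans hr1)).trans_lt h1

lemma one_add_mul_ne_of_padicNorm_sub_one_lt {y L R : ℚ} (hy : padicNorm p y ≤ 1)
    (hL : padicNorm p (L - 1) < padicNorm p y) (hR : padicNorm p (R - 1) < padicNorm p y) :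
    (1 + y) * L ≠ R := by
  intro h
  have h1 : y = (R - 1) - ((L - 1) + y * (L - 1)) := by rw [← h]; ring
  have h2 : padicNorm p y < padicNorm p y := by
    conv_lhs => rw [h1]
    refine padicNorm.sub.trans_lt (max_lt hR ?_)
    refine padicNorm.nonarchimedean.trans_lt (max_lt hL ?_)
    rw [padicNorm.mul]
    exact (mul_le_of_le_one_left (padicNorm.nonneg _) hy).trans_lt hL
  exact h2.false

/-- In a relation `∏ (1 + xᵢ) = ∏ (1 + yᵢ)` between `p`-integral numbers, the largest `p`-adic norm
occurs twice. -/
lemma exists_padicNorm_eq_of_prod_one_add_eq {ι κ : Type*} [Fintype ι] [Fintype κ]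
    [Nonempty (ι ⊕ κ)] (x : ι ⊕ κ → ℚ) (hx0 : ∀ s, x s ≠ 0) (hx : ∀ s, padicNorm p (x s) ≤ 1)
    (h : ∏ i, (1 + x (Sum.inl i)) = ∏ i, (1 + x (Sum.inr i))) :
    ∃ s t, s ≠ t ∧ padicNorm p (x s) = padicNorm p (x t) := by
  classical
  by_contra! hne
  obtain ⟨s, -, hs⟩ := Finset.exists_max_image Finset.univ (fun s => padicNorm p (x s))
    Finset.univ_nonempty
  have hlt : ∀ t, t ≠ s → padicNorm p (x t) < padicNorm p (x s) := fun t ht =>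
    (hs t (Finset.mem_univ _)).lt_of_ne (hne t s ht)
  have hpos : 0 < padicNorm p (x s) :=
    (padicNorm.nonneg _).lt_of_ne (padicNorm.nonzero (hx0 s)).symm
  rcases s with i | i
  · rw [← Finset.mul_prod_erase _ _ (Finset.mem_univ i)] at h
    exact one_add_mul_ne_of_padicNorm_sub_one_lt (hx (Sum.inl i))
      (padicNorm_prod_one_add_sub_one_lt _ (fun j => x (Sum.inl j)) hpos (hx _) fun j hj =>
        hlt _ (by simpa using Finset.ne_of_mem_erase hj))
      (padicNorm_prod_one_add_sub_one_lt _ (fun j => x (Sum.inr j)) hpos (hx _) fun j _ =>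
        hlt _ (by simp)) h
  · rw [← Finset.mul_prod_erase Finset.univ (fun j => 1 + x (Sum.inr j)) (Finset.mem_univ i)] at h
    exact one_add_mul_ne_of_padicNorm_sub_one_lt (hx (Sum.inr i))
      (padicNorm_prod_one_add_sub_one_lt _ (fun j => x (Sum.inr j)) hpos (hx _) fun j hj =>
        hlt _ (by simpa using Finset.ne_of_mem_erase hj))
      (padicNorm_prod_one_add_sub_one_lt _ (fun j => x (Sum.inl j)) hpos (hx _) fun j _ =>
        hlt _ (by simp)) h.symm

end Padic

/-! ### Energy bounds from a determining set of primes -/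

section Determining

variable {k : ℕ} {T : Finset ℚ} {P : Finset Nat.Primes}

/-- The primes in `P` determine, up to sign, products of `k` elements of `T - 1` among each
other. -/
def DeterminesProducts (k : ℕ) (P : Finset Nat.Primes) (T : Finset ℚ) : Prop :=
  ∀ f : Fin k ⊕ Fin k → ℚ, (∀ s, f s ∈ T) →
    (∀ p ∈ P, padicNorm p (∏ i, (f (Sum.inl i) - 1)) = padicNorm p (∏ i, (f (Sum.inr i) - 1))) →
    |∏ i, (f (Sum.inl i) - 1)| = |∏ i, (f (Sum.inr i) - 1)|

/-- All elements of `B - 1` have the same `p`-adic norm. -/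
def ConstantNorm (p : Nat.Primes) (B : Finset ℚ) : Prop :=
  ∀ b ∈ B, ∀ c ∈ B, padicNorm p (b - 1) = padicNorm p (c - 1)

lemma ConstantNorm.subset {p : Nat.Primes} {B B' : Finset ℚ} (hB : B' ⊆ B)
    (h : ConstantNorm p B) : ConstantNorm p B' :=
  fun b hb c hc => h b (hB hb) c (hB hc)

lemma constantNorm_filter (p : Nat.Primes) (B : Finset ℚ) (c : ℚ) :
    ConstantNorm p (B.filter fun b => padicNorm p (b - 1) = c) := fun _ hb _ hb' =>
  (Finset.mem_filter.1 hb).2.trans (Finset.mem_filter.1 hb').2.symm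

lemma hasEnergyBound_of_nonintegral_or_constantNorm (hk : 2 ≤ k) (h0 : (0 : ℚ) ∉ T)
    (h1 : (1 : ℚ) ∉ T) (P : Finset Nat.Primes) {C : ℝ} (hC : 0 ≤ C)
    (h : ∀ B ⊆ T, (∀ p ∈ P, (∀ b ∈ B, 1 < padicNorm p (b - 1)) ∨ ConstantNorm p B) →
      HasEnergyBound k C B) :
    HasEnergyBound k ((4 * (k : ℝ) ^ 2) ^ P.card * C) T := by
  classical
  refine hasEnergyBound_of_forall_restrict (by positivity)
    (fun (p : Nat.Primes) B => (∀ b ∈ B, 1 < padicNorm p (b - 1)) ∨ ConstantNorm p B) ?_ P ?_ hC T subset_rfl h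
  · rintro p B B' hB (h | h)
    · exact Or.inl fun b hb => h b (hB hb)
    · exact Or.inr (h.subset hB)
  intro p _ B hB C hC hB'
  have := Fact.mk p.2
  have hk1 : (1 : ℝ) ≤ k := by exact_mod_cast (by omega : 1 ≤ k)
  rw [show 4 * (k : ℝ) ^ 2 * C = 2 * (2 * (k : ℝ) ^ 2 * C) by ring]
  refine HasEnergyBound.of_split hk (fun h => h0 (hB h)) (by positivity)
    (fun b => padicNorm p (b - 1) ≤ 1) ?_ ?_
  · refine HasEnergyBound.of_fibers hk (fun h => h0 (hB (Finset.mem_filter.1 h).1)) hC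
      (fun b => padicNorm p (b - 1)) (fun f hf => ?_) fun c => hB' _
        ((Finset.filter_subset _ _).trans (Finset.filter_subset _ _))
        (Or.inr (constantNorm_filter p _ c))
    obtain ⟨hf, hsol⟩ := Finset.mem_filter.1 hf
    have hf' := fun s => Finset.mem_filter.1 (Fintype.mem_piFinset.1 hf s)
    have : Nonempty (Fin k ⊕ Fin k) := ⟨Sum.inl ⟨0, by omega⟩⟩
    refine exists_padicNorm_eq_of_prod_one_add_eq (fun s => f s - 1) (fun s hs => ?_)
      (fun s => (hf' s).2) (by simpa using hsol)
    exact h1 (sub_eq_zero.1 hs ▸ hB (hf' s).1)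
  · refine (hB' _ (Finset.filter_subset _ _) (Or.inl fun b hb => ?_)).mono hC ?_
    · exact not_le.1 (Finset.mem_filter.1 hb).2
    · exact le_mul_of_one_le_left hC (by nlinarith)

lemma hasEnergyBound_of_fixed_sign (hk : 2 ≤ k) (h0 : (0 : ℚ) ∉ T) (h1 : (1 : ℚ) ∉ T)
    (hP : DeterminesProducts k P T) (hsign : ∀ b ∈ T, ∀ c ∈ T, 0 < (b - 1) * (c - 1))
    (hT : ∀ p ∈ P, (∀ b ∈ T, 1 < padicNorm p (b - 1)) ∨ ConstantNorm p T) :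
    HasEnergyBound k ((2 * (k : ℝ) ^ 2) ^ P.card * 1) T := by
  classical
  have hne : ∀ b ∈ T, b - 1 ≠ 0 := fun b hb h => h1 (sub_eq_zero.1 h ▸ hb)
  have hprod : ∀ f : Fin k ⊕ Fin k → ℚ, (∀ s, f s ∈ T) →
      (∀ p ∈ P, padicNorm p (∏ i, (f (Sum.inl i) - 1)) =
        padicNorm p (∏ i, (f (Sum.inr i) - 1))) →
      ∏ i, (f (Sum.inl i) - 1) = ∏ i, (f (Sum.inr i) - 1) := by
    intro f hf h
    have hpos : 0 < (∏ i, (f (Sum.inl i) - 1)) * ∏ i, (f (Sum.inr i) - 1) := by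
      rw [← Finset.prod_mul_distrib]
      exact Finset.prod_pos fun i _ => hsign _ (hf _) _ (hf _)
    rcases abs_eq_abs.1 (hP f hf h) with h | h
    · exact h
    · rw [h] at hpos
      nlinarith [sq_nonneg (∏ i, (f (Sum.inr i) - 1))]
  refine hasEnergyBound_of_forall_restrict (by positivity) ConstantNorm
    (fun p B B' hB h => h.subset hB) P ?_ zero_le_one T subset_rfl ?_
  · intro p hp B hB C hC hB'
    have := Fact.mk p.2
    have hNe : Nonempty (Fin k ⊕ Fin k) := ⟨Sum.inl ⟨0, by omega⟩⟩
    refine HasEnergyBound.of_fibers hk (fun h => h0 (hB h)) hC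
      (fun b => padicNorm p (b - 1)) (fun f hf => ?_) fun c => hB' _ (Finset.filter_subset _ _)
        (constantNorm_filter p _ c)
    obtain ⟨hf, hsol⟩ := Finset.mem_filter.1 hf
    have hfT : ∀ s, f s ∈ T := fun s => hB (Fintype.mem_piFinset.1 hf s)
    rcases hT p hp with hneg | hconst
    · have heq : ∏ i, (f (Sum.inl i) - 1) = ∏ i, (f (Sum.inr i) - 1) := by
        refine hprod f hfT fun q hq => ?_
        have := Fact.mk q.2
        rw [padicNorm_prod, padicNorm_prod]
        rcases hT q hq with hneg | hconst
        · have hnorm : ∀ s, padicNorm q (f s - 1) = padicNorm q (f s) := fun s => by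
            rw [← padicNorm_one_add_of_one_lt (hneg _ (hfT s)), add_sub_cancel]
          simp only [hnorm]
          rw [← padicNorm_prod, ← padicNorm_prod, hsol]
        · exact Finset.prod_congr rfl fun i _ => hconst _ (hfT _) _ (hfT _)
      have hone : ∀ s, 1 + (f s - 1)⁻¹ = f s * (f s - 1)⁻¹ := fun s => by
        have := hne _ (hfT s)
        field_simp
        ring
      obtain ⟨s, t, hst, h⟩ := exists_padicNorm_eq_of_prod_one_add_eq (p := p)
        (fun s => (f s - 1)⁻¹) (fun s => inv_ne_zero (hne _ (hfT s)))
        (fun s => by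
          rw [← one_div, padicNorm.div, padicNorm.one]
          exact (div_le_one (zero_lt_one.trans (hneg _ (hfT s)))).2 (hneg _ (hfT s)).le)
        (by
          simp only [hone]
          rw [Finset.prod_mul_distrib, Finset.prod_mul_distrib, Finset.prod_inv_distrib,
            Finset.prod_inv_distrib, hsol, heq])
      refine ⟨s, t, hst, ?_⟩
      rw [← one_div, ← one_div, padicNorm.div, padicNorm.div, padicNorm.one, one_div, one_div] at h
      exact inv_injective h
    · exact ⟨Sum.inl ⟨0, by omega⟩, Sum.inr ⟨0, by omega⟩, by simp, hconst _ (hfT _) _ (hfT _)⟩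
  · intro B hB hconst
    refine hasEnergyBound_one_of_card_le_one k (Finset.card_le_one.2 fun b hb c hc => ?_)
    have h := hP (Sum.elim (fun _ => b) fun _ => c)
      (by rintro (i | i); exacts [hB hb, hB hc]) fun p hp => by
        have := Fact.mk p.2
        simp only [Sum.elim_inl, Sum.elim_inr, padicNorm_prod, hconst p hp b hb c hc]
    simp only [Sum.elim_inl, Sum.elim_inr, Finset.prod_const, Finset.card_univ, Fintype.card_fin,
      abs_pow] at h
    have habs := (pow_left_inj₀ (abs_nonneg _) (abs_nonneg _) (by omega)).1 h
    rcases abs_eq_abs.1 habs with h | h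
    · linarith
    · have := hsign b (hB hb) c (hB hc)
      rw [h] at this
      nlinarith [sq_nonneg (c - 1)]

lemma DeterminesProducts.subset {B : Finset ℚ} (hB : B ⊆ T) (h : DeterminesProducts k P T) :
    DeterminesProducts k P B :=
  fun f hf => h f fun s => hB (hf s)

theorem DeterminesProducts.hasEnergyBound (hk : 2 ≤ k) (h0 : (0 : ℚ) ∉ T) (h1 : (1 : ℚ) ∉ T)
    (hP : DeterminesProducts k P T) :
    HasEnergyBound k (2 * (8 * (k : ℝ) ^ 4) ^ P.card) T := by
  have hconst : (8 * (k : ℝ) ^ 4) ^ P.card =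
      (4 * (k : ℝ) ^ 2) ^ P.card * ((2 * (k : ℝ) ^ 2) ^ P.card * 1) := by
    rw [mul_one, ← mul_pow]
    ring
  have hpart : ∀ T' ⊆ T, (∀ b ∈ T', ∀ c ∈ T', 0 < (b - 1) * (c - 1)) →
      HasEnergyBound k ((8 * (k : ℝ) ^ 4) ^ P.card) T' := by
    intro T' hT' hsign
    rw [hconst]
    refine hasEnergyBound_of_nonintegral_or_constantNorm hk (fun h => h0 (hT' h))
      (fun h => h1 (hT' h)) P (by positivity) fun B hB hres => ?_
    exact hasEnergyBound_of_fixed_sign hk (fun h => h0 (hT' (hB h))) (fun h => h1 (hT' (hB h)))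
      (hP.subset (hB.trans hT')) (fun b hb c hc => hsign b (hB hb) c (hB hc)) hres
  refine HasEnergyBound.of_split hk h0 (by positivity) (fun b => 1 < b)
    (hpart _ (Finset.filter_subset _ _) fun b hb c hc => ?_)
    (hpart _ (Finset.filter_subset _ _) fun b hb c hc => ?_)
  · exact mul_pos (sub_pos.2 (Finset.mem_filter.1 hb).2) (sub_pos.2 (Finset.mem_filter.1 hc).2)
  · have hlt : ∀ b ∈ T.filter (fun b => ¬ 1 < b), b < 1 := fun b hb =>
      (not_lt.1 (Finset.mem_filter.1 hb).2).lt_of_ne fun h => h1 (h ▸ (Finset.mem_filter.1 hb).1)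
    exact mul_pos_of_neg_of_neg (sub_neg.2 (hlt b hb)) (sub_neg.2 (hlt c hc))

end Determining

/-! ### Freiman's lemma for products of rationals -/

section Freiman

open Module

/-- The vector of all `p`-adic valuations of a rational. -/
def valuationVector (a : ℚ) : Nat.Primes → ℚ := fun p => (padicValRat p a : ℚ)

lemma valuationVector_mul {a b : ℚ} (ha : a ≠ 0) (hb : b ≠ 0) :
    valuationVector (a * b) = valuationVector a + valuationVector b := by
  ext p
  have := Fact.mk p.2
  simp [valuationVector, padicValRat.mul ha hb]

lemma valuationVector_prod {ι : Type*} (s : Finset ι) (f : ι → ℚ) (hf : ∀ i ∈ s, f i ≠ 0) :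
    valuationVector (∏ i ∈ s, f i) = ∑ i ∈ s, valuationVector (f i) := by
  classical
  induction s using Finset.induction_on with
  | empty => ext p; simp [valuationVector]
  | insert a s ha ih =>
    have hs : ∀ i ∈ s, f i ≠ 0 := fun i hi => hf i (Finset.mem_insert_of_mem hi)
    rw [Finset.prod_insert ha, Finset.sum_insert ha, valuationVector_mul
      (hf a (Finset.mem_insert_self _ _)) (Finset.prod_ne_zero_iff.2 hs), ih hs]

lemma valuationVector_abs (a : ℚ) : valuationVector |a| = valuationVector a := by
  ext p
  rcases abs_choice a with h | h <;> simp [valuationVector, h, padicValRat.neg]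

lemma abs_eq_abs_of_valuationVector_eq {a b : ℚ} (ha : a ≠ 0) (hb : b ≠ 0)
    (h : valuationVector a = valuationVector b) : |a| = |b| := by
  have hval : ∀ p : ℕ, p.Prime →
      (a.num.natAbs * b.den).factorization p = (b.num.natAbs * a.den).factorization p := by
    intro p hp
    have := Fact.mk hp
    have h1 : padicValRat p a = padicValRat p b := by
      have := congrFun h ⟨p, hp⟩
      simpa [valuationVector] using this
    rw [padicValRat_def, padicValRat_def] at h1
    rw [Nat.factorization_mul (by simpa using ha) b.den_ne_zero,
      Nat.factorization_mul (by simpa using hb) a.den_ne_zero]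
    simp only [Finsupp.add_apply, Nat.factorization_def _ hp]
    simp only [padicValInt] at h1
    omega
  have hnat : a.num.natAbs * b.den = b.num.natAbs * a.den := by
    refine Nat.eq_of_factorization_eq (mul_ne_zero (by simpa using ha) b.den_ne_zero)
      (mul_ne_zero (by simpa using hb) a.den_ne_zero) fun p => ?_
    by_cases hp : p.Prime
    · exact hval p hp
    · rw [Nat.factorization_eq_zero_of_not_prime _ hp, Nat.factorization_eq_zero_of_not_prime _ hp]
  have habs : ∀ c : ℚ, |c| = (c.num.natAbs : ℚ) / c.den := by
    intro c
    conv_lhs => rw [← Rat.num_div_den c]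
    rw [abs_div, Nat.abs_cast, Nat.cast_natAbs, Int.cast_abs]
  rw [habs a, habs b, div_eq_div_iff (by simp) (by simp)]
  exact_mod_cast hnat

/-- The dimension of the affine span of the valuation vectors of `A`. -/
noncomputable def multDim (A : Finset ℚ) : ℕ :=
  finrank ℚ (vectorSpan ℚ (valuationVector '' (A : Set ℚ)))

/-- Let `Y` consist of rationals larger than `x > 0`. Then the elements `y` of `Y` for which
`x * y` is not a product of two elements of `Y` are at least as many as the dimension of the
multiplicative span of `Y` based at `x`. -/
lemma finrank_span_le_card_filter_mul_notMem (Y : Finset ℚ) {x : ℚ} (hx : 0 < x)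
    (hY : ∀ y ∈ Y, x < y) :
    finrank ℚ (Submodule.span ℚ ((fun y => valuationVector y - valuationVector x) '' (Y : Set ℚ)))
      ≤ (Y.filter fun y => x * y ∉ Y * Y).card := by
  classical
  set S := Y.filter fun y => x * y ∉ Y * Y with hS
  set w : ℚ → Nat.Primes → ℚ := fun y => valuationVector y - valuationVector x with hw
  set W := Submodule.span ℚ ((S.image w : Finset _) : Set (Nat.Primes → ℚ)) with hW
  have hmem : ∀ y ∈ Y, w y ∈ W := by
    by_contra! hbad
    obtain ⟨y, hy, hmin⟩ := Finset.exists_min_image (Y.filter fun y => w y ∉ W) id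
      (by obtain ⟨y, hy, hyW⟩ := hbad; exact ⟨y, Finset.mem_filter.2 ⟨hy, hyW⟩⟩)
    obtain ⟨hyY, hyW⟩ := Finset.mem_filter.1 hy
    have hyS : y ∉ S := fun h =>
      hyW (Submodule.subset_span (by exact_mod_cast Finset.mem_image_of_mem w h))
    have hyy : x * y ∈ Y * Y := by
      by_contra h
      exact hyS (Finset.mem_filter.2 ⟨hyY, h⟩)
    obtain ⟨y₁, hy₁, y₂, hy₂, h12⟩ := Finset.mem_mul.1 hyy
    have hx1 := hY y₁ hy₁
    have hx2 := hY y₂ hy₂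
    have hsmall : ∀ z ∈ Y, z < y → w z ∈ W := fun z hz hzy => by
      by_contra h
      exact (hmin z (Finset.mem_filter.2 ⟨hz, h⟩)).not_gt hzy
    have hwy : w y = w y₁ + w y₂ := by
      have h3 := congrArg valuationVector h12
      rw [valuationVector_mul (hx.trans hx1).ne' (hx.trans hx2).ne',
        valuationVector_mul hx.ne' (hx.trans (hY y hyY)).ne'] at h3
      simp only [hw]
      rw [show valuationVector y = valuationVector y₁ + valuationVector y₂ - valuationVector x by
        rw [h3]; abel]
      abel
    exact hyW (hwy ▸ W.add_mem (hsmall _ hy₁ (by nlinarith)) (hsmall _ hy₂ (by nlinarith)))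
  calc finrank ℚ (Submodule.span ℚ (w '' (Y : Set ℚ))) ≤ finrank ℚ W := by
        refine Submodule.finrank_mono (Submodule.span_le.2 ?_)
        rintro _ ⟨y, hy, rfl⟩
        exact hmem y hy
    _ ≤ (S.image w).card := finrank_span_finset_le_card _
    _ ≤ S.card := Finset.card_image_le

/-- A multiplicative analogue in `ℚ` of Freiman's lemma. -/
theorem succ_mul_card_le_card_mul_self (A : Finset ℚ) (hA : (0 : ℚ) ∉ A) (D : ℕ)
    (hD : D ≤ multDim A) : (D + 1) * A.card ≤ (A * A).card + D * (D + 1) := by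
  classical
  induction A using Finset.strongInduction generalizing D with
  | H A ih =>
  rcases A.eq_empty_or_nonempty with rfl | hne
  · simp
  have hA0 : ∀ a ∈ A, a ≠ 0 := fun a ha h => hA (h ▸ ha)
  obtain ⟨x, hxA, hxmin⟩ := Finset.exists_min_image A (fun a => |a|) hne
  set F := A.filter fun a => |a| = |x| with hF
  set A' := A.filter fun a => ¬ |a| = |x| with hA'
  have hcard : F.card + A'.card = A.card := Finset.card_filter_add_card_filter_not _
  have hA'A : A' ⊆ A := Finset.filter_subset _ _
  have hxF : x ∈ F := Finset.mem_filter.2 ⟨hxA, rfl⟩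
  have hx0 : 0 < |x| := abs_pos.2 (hA0 x hxA)
  have hlt : ∀ a ∈ A', |x| < |a| := fun a ha =>
    (hxmin a (hA'A ha)).lt_of_ne fun h => (Finset.mem_filter.1 ha).2 h.symm
  have hss : A' ⊂ A := (Finset.ssubset_iff_of_subset hA'A).2
    ⟨x, hxA, fun h => (hlt x h).false⟩
  have hF2 : F.card ≤ 2 := by
    refine (Finset.card_le_card (t := {x, -x}) fun a ha => ?_).trans Finset.card_le_two
    simpa using abs_eq_abs.1 (Finset.mem_filter.1 ha).2
  have hins : valuationVector '' (A : Set ℚ) =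
      insert (valuationVector x) (valuationVector '' (A' : Set ℚ)) := by
    ext u
    constructor
    · rintro ⟨a, ha, rfl⟩
      by_cases h : |a| = |x|
      · left
        rw [← valuationVector_abs a, h, valuationVector_abs]
      · exact Or.inr ⟨a, Finset.mem_filter.2 ⟨ha, h⟩, rfl⟩
    · rintro (rfl | ⟨a, ha, rfl⟩)
      · exact ⟨x, hxA, rfl⟩
      · exact ⟨a, hA'A ha, rfl⟩
  -- Each case exhibits enough new products involving elements of minimal absolute value.
  have hnew : ∀ N : Finset ℚ, N ⊆ A * A → Disjoint N (A' * A') →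
      N.card + (A' * A').card ≤ (A * A).card := fun N hN hdis => by
    rw [← Finset.card_union_of_disjoint hdis]
    exact Finset.card_le_card (Finset.union_subset hN (Finset.mul_subset_mul hA'A hA'A))
  by_cases hdim : D ≤ multDim A'
  · have hind := ih A' hss (fun h => hA (hA'A h)) D hdim
    set Y := A'.image fun a => |a| with hY
    set S := Y.filter fun y => |x| * y ∉ Y * Y with hS
    have hYlt : ∀ y ∈ Y, |x| < y := by
      intro y hy
      obtain ⟨a, ha, rfl⟩ := Finset.mem_image.1 hy
      exact hlt a ha
    have hSD : D ≤ S.card := by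
      refine hD.trans (le_trans ?_ (finrank_span_le_card_filter_mul_notMem Y hx0 hYlt))
      unfold multDim
      refine le_of_eq ?_
      rw [hins, vectorSpan_eq_span_vsub_set_right ℚ (Set.mem_insert _ _), Set.image_insert_eq,
        vsub_self, Submodule.span_insert_zero, hY, Finset.coe_image, Set.image_image,
        Set.image_image]
      have hfun : (fun a => valuationVector |a| - valuationVector |x|) =
          fun a => valuationVector a -ᵥ valuationVector x := by
        simp only [valuationVector_abs, vsub_eq_sub]
      rw [hfun]
    have hrep : ∀ s ∈ insert |x| S, ∃ z ∈ A, |z| = s := by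
      intro s hs
      rcases Finset.mem_insert.1 hs with rfl | hs
      · exact ⟨x, hxA, rfl⟩
      · obtain ⟨a, ha, rfl⟩ := Finset.mem_image.1 (Finset.mem_filter.1 hs).1
        exact ⟨a, hA'A ha, rfl⟩
    choose! z hzA hz using hrep
    have hinj : Set.InjOn (fun q : ℚ × ℚ => q.1 * z q.2) (F ×ˢ insert |x| S : Finset (ℚ × ℚ)) := by
      rintro ⟨g, s⟩ hgs ⟨g', s'⟩ hgs' h
      simp only [Finset.coe_product, Set.mem_prod, Finset.mem_coe] at hgs hgs'
      dsimp only at h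
      have hs : s = s' := by
        have := congrArg abs h
        rw [abs_mul, abs_mul, hz s hgs.2, hz s' hgs'.2, (Finset.mem_filter.1 hgs.1).2,
          (Finset.mem_filter.1 hgs'.1).2] at this
        exact mul_left_cancel₀ hx0.ne' this
      subst hs
      rw [mul_right_cancel₀ (hA0 _ (hzA s hgs.2)) h]
    have h1 := hnew ((F ×ˢ insert |x| S).image fun q : ℚ × ℚ => q.1 * z q.2) (by
        intro q hq
        obtain ⟨⟨g, s⟩, hgs, rfl⟩ := Finset.mem_image.1 hq
        obtain ⟨hg, hs⟩ := Finset.mem_product.1 hgs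
        exact Finset.mul_mem_mul (Finset.mem_filter.1 hg).1 (hzA s hs)) (by
        refine Finset.disjoint_left.2 fun q hq hq' => ?_
        obtain ⟨⟨g, s⟩, hgs, rfl⟩ := Finset.mem_image.1 hq
        obtain ⟨hg, hs⟩ := Finset.mem_product.1 hgs
        obtain ⟨a, ha, b, hb, hab⟩ := Finset.mem_mul.1 hq'
        have habs : |a| * |b| = |x| * s := by
          rw [← abs_mul, hab, abs_mul, hz s hs, (Finset.mem_filter.1 hg).2]
        rcases Finset.mem_insert.1 hs with rfl | hs
        · nlinarith [hlt a ha, hlt b hb]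
        · exact (Finset.mem_filter.1 hs).2 (habs ▸ Finset.mul_mem_mul
            (Finset.mem_image_of_mem _ ha) (Finset.mem_image_of_mem _ hb)))
    have hxS : |x| ∉ S := fun h => (hYlt _ (Finset.mem_filter.1 h).1).false
    rw [Finset.card_image_of_injOn hinj, Finset.card_product,
      Finset.card_insert_of_notMem hxS] at h1
    rw [← hcard]
    nlinarith [Nat.mul_le_mul_left F.card hSD]
  · have hA'ne : A'.Nonempty := by
      by_contra h
      rw [Finset.not_nonempty_iff_eq_empty] at h
      rw [multDim, hins, h, Finset.coe_empty, Set.image_empty, insert_empty_eq,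
        vectorSpan_singleton, finrank_bot] at hD
      omega
    obtain ⟨E, rfl⟩ : ∃ E, D = E + 1 := ⟨D - 1, by omega⟩
    have hE : E ≤ multDim A' := by
      have := finrank_vectorSpan_insert_le_set ℚ (valuationVector '' (A' : Set ℚ))
        (valuationVector x)
      rw [← hins] at this
      exact Nat.le_of_succ_le_succ (hD.trans this)
    have hind := ih A' hss (fun h => hA (hA'A h)) E hE
    have h1 := hnew (A.image fun a => x * a) (by
        intro q hq
        obtain ⟨a, ha, rfl⟩ := Finset.mem_image.1 hq
        exact Finset.mul_mem_mul hxA ha) (by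
        refine Finset.disjoint_left.2 fun q hq hq' => ?_
        obtain ⟨a, ha, rfl⟩ := Finset.mem_image.1 hq
        obtain ⟨b, hb, c, hc, hbc⟩ := Finset.mem_mul.1 hq'
        by_cases haF : |a| = |x|
        · have := congrArg abs hbc
          rw [abs_mul, abs_mul, haF] at this
          nlinarith [hlt b hb, hlt c hc]
        · have haA' : a ∈ A' := Finset.mem_filter.2 ⟨ha, haF⟩
          have hv := congrArg valuationVector hbc
          rw [valuationVector_mul (hA0 b (hA'A hb)) (hA0 c (hA'A hc)),
            valuationVector_mul (hA0 x hxA) (hA0 a ha)] at hv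
          have hspan : valuationVector x ∈
              affineSpan ℚ (valuationVector '' (A' : Set ℚ)) := by
            have hmem := AffineSubspace.vadd_mem_of_mem_direction
              (s := affineSpan ℚ (valuationVector '' (A' : Set ℚ)))
              (v := valuationVector b - valuationVector a) (p := valuationVector c)
              (by
                rw [direction_affineSpan]
                exact vsub_mem_vectorSpan ℚ ⟨b, hb, rfl⟩ ⟨a, haA', rfl⟩)
              (mem_affineSpan ℚ ⟨c, hc, rfl⟩)
            convert hmem using 1
            rw [vadd_eq_add, sub_add_eq_add_sub, hv]
            abel
          refine hdim (hD.trans_eq ?_)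
          unfold multDim
          rw [hins, vectorSpan_insert_eq_vectorSpan hspan])
    rw [Finset.card_image_of_injective _ (mul_right_injective₀ (hA0 x hxA))] at h1
    rw [← hcard] at h1 ⊢
    nlinarith

/-- A finite-dimensional space of functions is determined by as many values as its dimension. -/
lemma exists_finset_card_le_finrank_forall_eq_zero {ι : Type*} (U : Submodule ℚ (ι → ℚ))
    [FiniteDimensional ℚ U] :
    ∃ P : Finset ι, P.card ≤ finrank ℚ U ∧ ∀ u ∈ U, (∀ p ∈ P, u p = 0) → u = 0 := by
  classical
  induction hn : finrank ℚ U using Nat.strong_induction_on generalizing U with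
  | _ n ih =>
  by_cases hU : ∀ u ∈ U, u = 0
  · exact ⟨∅, by simp, fun u hu _ => hU u hu⟩
  push Not at hU
  obtain ⟨u, hu, hu0⟩ := hU
  obtain ⟨p, hp⟩ := Function.ne_iff.1 hu0
  set U' := U ⊓ LinearMap.ker (LinearMap.proj p : (ι → ℚ) →ₗ[ℚ] ℚ) with hU'
  have hlt : U' < U := lt_of_le_of_ne inf_le_left fun h => hp (by
    have : u ∈ U' := h ▸ hu
    simpa using (Submodule.mem_inf.1 this).2)
  have hfin : FiniteDimensional ℚ U' := Submodule.finiteDimensional_of_le hlt.le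
  have hrank := Submodule.finrank_lt_finrank_of_lt hlt
  obtain ⟨P, hPcard, hP⟩ := ih _ (hn ▸ hrank) U' rfl
  refine ⟨insert p P, ?_, fun w hw h => ?_⟩
  · have := Finset.card_insert_le p P
    omega
  · refine hP w (Submodule.mem_inf.2 ⟨hw, ?_⟩) fun q hq => h q (Finset.mem_insert_of_mem hq)
    simpa using h p (Finset.mem_insert_self _ _)

lemma exists_determinesProducts (k : ℕ) (A : Finset ℚ) (hA : (0 : ℚ) ∉ A) :
    ∃ P : Finset Nat.Primes, P.card ≤ multDim A ∧
      DeterminesProducts k P (A.image fun a => a + 1) := by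
  have hfin : FiniteDimensional ℚ (vectorSpan ℚ (valuationVector '' (A : Set ℚ))) :=
    finiteDimensional_vectorSpan_of_finite ℚ (A.finite_toSet.image _)
  obtain ⟨P, hPcard, hP⟩ := exists_finset_card_le_finrank_forall_eq_zero
    (vectorSpan ℚ (valuationVector '' (A : Set ℚ)))
  refine ⟨P, hPcard, fun f hf hnorm => ?_⟩
  have hfA : ∀ s, f s - 1 ∈ A := fun s => by
    obtain ⟨a, ha, h⟩ := Finset.mem_image.1 (hf s)
    rwa [← h, add_sub_cancel_right]
  have hf0 : ∀ s, f s - 1 ≠ 0 := fun s h => hA (h ▸ hfA s)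
  have hl : ∏ i, (f (Sum.inl i) - 1) ≠ 0 := Finset.prod_ne_zero_iff.2 fun i _ => hf0 _
  have hr : ∏ i, (f (Sum.inr i) - 1) ≠ 0 := Finset.prod_ne_zero_iff.2 fun i _ => hf0 _
  refine abs_eq_abs_of_valuationVector_eq hl hr (sub_eq_zero.1 (hP _ ?_ fun p hp => ?_))
  · rw [valuationVector_prod _ _ fun i _ => hf0 _, valuationVector_prod _ _ fun i _ => hf0 _,
      ← Finset.sum_sub_distrib]
    exact Submodule.sum_mem _ fun i _ =>
      vsub_mem_vectorSpan ℚ ⟨_, hfA (Sum.inl i), rfl⟩ ⟨_, hfA (Sum.inr i), rfl⟩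
  · have h := hnorm p hp
    rw [padicNorm.eq_zpow_of_nonzero hl, padicNorm.eq_zpow_of_nonzero hr] at h
    have h1 := zpow_right_injective₀ (by exact_mod_cast p.2.pos)
      (by exact_mod_cast p.2.one_lt.ne') h
    simp [valuationVector, neg_injective h1]

end Freiman

theorem energy_of_shifted_subset
    (A : Finset ℚ) (hA0 : (0 : ℚ) ∉ A) (hA1 : (-1 : ℚ) ∉ A)
    (K : ℕ) (hK : 0 < K) (hAA : (A * A).card ≤ K * A.card)
    (k : ℕ) (hk : 2 ≤ k) :
    ∀ A' ⊆ A, (multEnergy k (A'.image fun a => a + 1) : ℝ) ≤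
      (8 * (k : ℝ) ^ 4) ^ (k * K) * (A'.card : ℝ) ^ k := by
  intro A' hA'
  have hk2 : (2 : ℝ) ≤ k := by exact_mod_cast hk
  have h8 : (4 : ℝ) ≤ 8 * (k : ℝ) ^ 4 := by
    have : (1 : ℝ) ≤ (k : ℝ) ^ 4 := one_le_pow₀ (by linarith)
    linarith
  have hT : (A'.image fun a => a + 1).card = A'.card :=
    Finset.card_image_of_injective _ (add_left_injective 1)
  rw [mul_comm k K, pow_mul, ← mul_pow]
  by_cases hsmall : (A.card : ℝ) ≤ (8 * (k : ℝ) ^ 4) ^ K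
  · have h1 := multEnergy_le_card_pow_mul_card_pow k (A'.image fun a => a + 1)
    rw [hT, ← mul_pow] at h1
    calc (multEnergy k (A'.image fun a => a + 1) : ℝ) ≤ ((A'.card : ℝ) * A'.card) ^ k := by
          exact_mod_cast h1
      _ ≤ _ := by
          gcongr
          exact le_trans (by exact_mod_cast Finset.card_le_card hA') hsmall
  · have hdim : multDim A < K := by
      by_contra! hdim
      have h1 := succ_mul_card_le_card_mul_self A hA0 K hdim
      have h2 : A.card ≤ K * (K + 1) := by nlinarith
      have h3 : K * (K + 1) ≤ 4 ^ K := by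
        rw [show 4 = 2 * 2 from rfl, mul_pow]
        exact Nat.mul_le_mul Nat.lt_two_pow_self.le Nat.lt_two_pow_self
      refine hsmall (le_trans ?_ (pow_le_pow_left₀ (by norm_num) h8 K))
      exact_mod_cast h2.trans h3
    obtain ⟨P, hPcard, hP⟩ := exists_determinesProducts k A hA0
    have hbound : HasEnergyBound k _ (A'.image fun a => a + 1) :=
      (hP.subset (Finset.image_subset_image hA')).hasEnergyBound hk (fun h => by
        obtain ⟨a, ha, h⟩ := Finset.mem_image.1 h
        exact hA1 (eq_neg_of_add_eq_zero_left h ▸ hA' ha)) (fun h => by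
        obtain ⟨a, ha, h⟩ := Finset.mem_image.1 h
        exact hA0 (add_eq_right.1 h ▸ hA' ha))
    have hconst : 2 * (8 * (k : ℝ) ^ 4) ^ P.card ≤ (8 * (k : ℝ) ^ 4) ^ K := by
      calc 2 * (8 * (k : ℝ) ^ 4) ^ P.card
          ≤ (8 * (k : ℝ) ^ 4) * (8 * (k : ℝ) ^ 4) ^ P.card := by gcongr; linarith
        _ = (8 * (k : ℝ) ^ 4) ^ (P.card + 1) := (pow_succ' _ _).symm
        _ ≤ _ := pow_le_pow_right₀ (by linarith) (by omega)
    have := hbound.mono (by positivity) hconst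
    rwa [HasEnergyBound, hT] at this
end

section
/- Let p be a prime, let u be a nonzero integer not divisible by p, let k ≥ 1 be an integer, let j_1, …, j_{2k} be pairwise distinct positive integers, and let m_1, …, m_{2k} be nonzero rational numbers each with p-adic valuation 0. Then (m_1 p^{j_1} + u)(m_2 p^{j_2} + u) ⋯ (m_k p^{j_k} + u) ≠ (m_{k+1} p^{j_{k+1}} + u) ⋯ (m_{2k} p^{j_{2k}} + u). -/
open Finset

/-- If two products of shifts by a unit agree and every shift, except possibly one on the left,
is zero, then the remaining one is zero as well. -/
theorem eq_zero_of_prod_add_unit_eq {ι A : Type*} [Fintype ι] [CommRing A]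
    {f g : ι → A} {u : A} (hu : IsUnit u) (i₀ : ι) (hf : ∀ i, i ≠ i₀ → f i = 0)
    (hg : ∀ i, g i = 0) (h : ∏ i, (f i + u) = ∏ i, (g i + u)) : f i₀ = 0 := by
  classical
  rw [← Finset.mul_prod_erase univ _ (mem_univ i₀),
    ← Finset.mul_prod_erase univ (fun i => g i + u) (mem_univ i₀),
    Finset.prod_congr rfl (g := fun _ => u)
      (fun i hi => by rw [hf i (Finset.ne_of_mem_erase hi), zero_add]),
    Finset.prod_congr rfl (f := fun i => g i + u) (g := fun _ => u)
      (fun i _ => by rw [hg i, zero_add]), hg i₀, zero_add, Finset.prod_const] at h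
  simpa using (hu.pow _).mul_right_cancel h

/-- A rational number of `p`-adic valuation zero comes from a `p`-adic unit. -/
theorem exists_padicInt_isUnit_coe_eq {p : ℕ} [Fact p.Prime] {q : ℚ} (hq : q ≠ 0)
    (hv : padicValRat p q = 0) : ∃ w : ℤ_[p], IsUnit w ∧ (w : ℚ_[p]) = q := by
  have hn : ‖(q : ℚ_[p])‖ = 1 := by
    rw [Padic.eq_padicNorm, padicNorm.eq_zpow_of_nonzero hq, hv]
    simp
  exact ⟨⟨q, hn.le⟩, PadicInt.isUnit_iff.2 hn, rfl⟩

theorem no_solutions_with_distinct_powers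
    (p : ℕ) (hp : p.Prime) (u : ℤ) (hu : u ≠ 0) (hpu : ¬ (p : ℤ) ∣ u)
    (k : ℕ) (hk : 1 ≤ k)
    (j : Fin (k + k) → ℕ) (hjpos : ∀ i, 0 < j i) (hjinj : Function.Injective j)
    (m : Fin (k + k) → ℚ) (hm0 : ∀ i, m i ≠ 0)
    (hmv : ∀ i, padicValRat p (m i) = 0) :
    (∏ i : Fin k, (m (Fin.castAdd k i) * (p : ℚ) ^ j (Fin.castAdd k i) + (u : ℚ))) ≠
      ∏ i : Fin k, (m (Fin.natAdd k i) * (p : ℚ) ^ j (Fin.natAdd k i) + (u : ℚ)) := by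
  intro h
  have : Fact p.Prime := ⟨hp⟩
  choose w hw hwm using fun i => exists_padicInt_isUnit_coe_eq (hm0 i) (hmv i)
  have huu : IsUnit (u : ℤ_[p]) := by
    rw [PadicInt.isUnit_iff]
    exact le_antisymm (PadicInt.norm_le_one _)
      (not_lt.1 fun hlt => hpu ((PadicInt.norm_int_lt_one_iff_dvd u).1 hlt))
  have hZ : (∏ i : Fin k, (w (Fin.castAdd k i) * (p : ℤ_[p]) ^ j (Fin.castAdd k i) + u)) =
      ∏ i : Fin k, (w (Fin.natAdd k i) * (p : ℤ_[p]) ^ j (Fin.natAdd k i) + u) := by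
    apply Subtype.coe_injective
    have hwc : ∀ i, PadicInt.Coe.ringHom (w i) = Rat.castHom ℚ_[p] (m i) := hwm
    have hQ := congrArg (Rat.castHom ℚ_[p]) h
    change PadicInt.Coe.ringHom _ = PadicInt.Coe.ringHom _
    simp only [map_prod, map_add, map_mul, map_pow, map_natCast, map_intCast] at hQ ⊢
    simpa only [hwc] using hQ
  have : Nonempty (Fin (k + k)) := ⟨⟨0, by omega⟩⟩
  obtain ⟨i₀, hmin⟩ := Finite.exists_min j
  let π := Ideal.Quotient.mk (Ideal.span {(p : ℤ_[p]) ^ (j i₀ + 1)})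
  let x : Fin (k + k) → ℤ_[p] := fun i => w i * (p : ℤ_[p]) ^ j i
  have hx : ∀ i, i ≠ i₀ → π (x i) = 0 := fun i hi => by
    have hlt : j i₀ < j i := lt_of_le_of_ne (hmin i) fun e => hi (hjinj e.symm)
    exact Ideal.Quotient.eq_zero_iff_mem.2
      (Ideal.mem_span_singleton.2 ((pow_dvd_pow _ hlt).mul_left _))
  have hx₀ : π (x i₀) ≠ 0 := fun h0 => by
    have hd := Ideal.mem_span_singleton.1 (Ideal.Quotient.eq_zero_iff_mem.1 h0)
    rw [(hw i₀).dvd_mul_left] at hd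
    have := (pow_dvd_pow_iff PadicInt.prime_p.ne_zero PadicInt.prime_p.not_isUnit).1 hd
    omega
  have hπ := congrArg π hZ
  simp only [map_prod, map_add _ _ (u : ℤ_[p])] at hπ
  apply hx₀
  clear_value π
  induction i₀ using Fin.addCases with
  | left i =>
    refine eq_zero_of_prod_add_unit_eq (f := fun l => π (x (Fin.castAdd k l)))
      (huu.map π) i (fun l hl => hx _ (by simpa using hl)) (fun l => hx _ ?_) hπ
    simp [Fin.ext_iff]; omega
  | right i =>
    refine eq_zero_of_prod_add_unit_eq (f := fun l => π (x (Fin.natAdd k l)))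
      (huu.map π) i (fun l hl => hx _ (by simpa using hl)) (fun l => hx _ ?_) hπ.symm
    simp [Fin.ext_iff]; omega
end

section
/- (Chang) Let A be a finite set of nonzero rational numbers, let K be a positive integer with |AA| ≤ K|A|, and let k ≥ 2 be an integer. Then the k-fold additive energy satisfies E_k^+(A) ≤ |A|^k (2k^2 - k)^{kK}. -/
open Finset Pointwise

/-- The `k`-fold additive energy of a finite set `A ⊆ ℚ`: the number of
`2k`-tuples `(a₁, …, a_{2k}) ∈ A^{2k}` with `a₁ + ⋯ + a_k = a_{k+1} + ⋯ + a_{2k}`. -/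
def addEnergy (k : ℕ) (A : Finset ℚ) : ℕ :=
  (((Fintype.piFinset fun _ : Fin k => A) ×ˢ
      (Fintype.piFinset fun _ : Fin k => A)).filter
      (fun fg => ∑ i, fg.1 i = ∑ i, fg.2 i)).card

/-- The vector of all `p`-adic valuations of a rational number. -/
def primeVal (a : ℚ) : Nat.Primes → ℚ := fun p => (padicValRat p a : ℚ)

lemma primeVal_mul {a b : ℚ} (ha : a ≠ 0) (hb : b ≠ 0) :
    primeVal (a * b) = primeVal a + primeVal b := by
  funext p
  have : Fact (p : ℕ).Prime := ⟨p.2⟩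
  simp [primeVal, padicValRat.mul ha hb]

lemma primeVal_neg (a : ℚ) : primeVal (-a) = primeVal a := by
  funext p
  simp [primeVal]

lemma primeVal_eq_of_abs_eq {a b : ℚ} (h : |a| = |b|) : primeVal a = primeVal b := by
  rcases abs_eq_abs.1 h with rfl | rfl
  · rfl
  · exact primeVal_neg b

lemma abs_eq_one_of_primeVal_eq_zero {c : ℚ} (hc : c ≠ 0) (h : primeVal c = 0) : |c| = 1 := by
  have key : ∀ p : ℕ, p.Prime → padicValNat p c.num.natAbs = padicValNat p c.den := by
    intro p hp
    have h0 : (padicValRat p c : ℚ) = 0 := congrFun h ⟨p, hp⟩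
    rw [Int.cast_eq_zero, padicValRat_def, padicValInt] at h0
    omega
  have hn : c.num.natAbs ≠ 0 := by simpa using hc
  have hnd : c.num.natAbs = c.den := by
    refine Nat.eq_of_factorization_eq hn c.den_ne_zero fun p => ?_
    by_cases hp : p.Prime
    · simpa [Nat.factorization_def _ hp] using key p hp
    · simp [Nat.factorization_eq_zero_of_not_prime _ hp]
  have hd : c.den = 1 := by
    have := c.reduced
    rw [hnd] at this
    simpa using this
  rw [← Rat.num_div_den c, abs_div, hd]
  have : |(c.num : ℚ)| = (c.num.natAbs : ℚ) := by
    rw [Nat.cast_natAbs]; simp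
  rw [this, hnd, hd]
  simp

lemma abs_eq_of_primeVal_eq {a b : ℚ} (ha : a ≠ 0) (hb : b ≠ 0)
    (h : primeVal a = primeVal b) : |a| = |b| := by
  have hc : primeVal (a / b) = 0 := by
    have := primeVal_mul (div_ne_zero ha hb) hb
    rw [div_mul_cancel₀ _ hb, h] at this
    simpa using this
  have := abs_eq_one_of_primeVal_eq_zero (div_ne_zero ha hb) hc
  rwa [abs_div, div_eq_one_iff_eq (abs_ne_zero.2 hb)] at this

/-- The dimension of the affine span of the valuation vectors of `A`. -/
noncomputable def mulDim (A : Finset ℚ) : ℕ :=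
  Module.finrank ℚ (vectorSpan ℚ (primeVal '' (A : Set ℚ)))

instance (A : Finset ℚ) : FiniteDimensional ℚ (vectorSpan ℚ (primeVal '' (A : Set ℚ))) :=
  finiteDimensional_vectorSpan_of_finite ℚ (A.finite_toSet.image _)

lemma mulDim_le_of_subset_affineSpan {A B : Finset ℚ}
    (h : primeVal '' (A : Set ℚ) ⊆ affineSpan ℚ (primeVal '' (B : Set ℚ))) :
    mulDim A ≤ mulDim B := by
  refine Submodule.finrank_mono ?_
  rw [← direction_affineSpan, ← direction_affineSpan]
  exact AffineSubspace.direction_le (affineSpan_le.2 h)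

lemma mulDim_lt_card {A : Finset ℚ} (hA : A.Nonempty) : mulDim A < #A := by
  classical
  obtain ⟨n, hn⟩ := Nat.exists_eq_succ_of_ne_zero hA.card_pos.ne'
  have := finrank_vectorSpan_image_finset_le ℚ primeVal A hn
  rw [coe_image] at this
  have : mulDim A ≤ n := this
  omega

/-- A product relation `x * y = ± v * w` places `w` in the affine span of `x`, `y`, `v`. -/
lemma primeVal_mem_of_abs_mul_eq {Q : AffineSubspace ℚ (Nat.Primes → ℚ)} {x y v w : ℚ}
    (hx : x ≠ 0) (hy : y ≠ 0) (hv : v ≠ 0) (hw : w ≠ 0) (h : |x * y| = |v * w|)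
    (hxQ : primeVal x ∈ Q) (hyQ : primeVal y ∈ Q) (hvQ : primeVal v ∈ Q) : primeVal w ∈ Q := by
  have h1 := primeVal_eq_of_abs_eq h
  rw [primeVal_mul hx hy, primeVal_mul hv hw] at h1
  have h2 := Q.smul_vsub_vadd_mem 1 hxQ hvQ hyQ
  simp only [vsub_eq_sub, vadd_eq_add, one_smul] at h2
  have : primeVal w = primeVal x - primeVal v + primeVal y := by
    linear_combination -h1
  rwa [this]

/-- For `v ∈ A`, the products of `v` and its associates with at least
`mulDim A + 1` elements of `A` avoid the products of elements of
absolute value smaller than `|v|`. -/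
lemma exists_injOn_abs_avoiding {A : Finset ℚ} (hA0 : (0 : ℚ) ∉ A) {v : ℚ} (hv : v ∈ A) :
    ∃ T ⊆ A, mulDim A < #T ∧ Set.InjOn (fun a : ℚ => |a|) T ∧
      ∀ w ∈ T, ∀ x ∈ A, ∀ y ∈ A, |x| < |v| → |y| < |v| → |x * y| ≠ |v * w| := by
  classical
  set S := A.filter fun w => ∀ x ∈ A, ∀ y ∈ A, |x| < |v| → |y| < |v| → |x * y| ≠ |v * w| with hS
  have hne : ∀ a ∈ A, a ≠ 0 := fun a ha h => hA0 (h ▸ ha)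
  have hv0 : 0 < |v| := abs_pos.2 (hne v hv)
  have hvS : v ∈ S := by
    refine mem_filter.2 ⟨hv, fun x _ y _ hx hy => ?_⟩
    rw [abs_mul, abs_mul]
    exact (mul_lt_mul'' hx hy (abs_nonneg _) (abs_nonneg _)).ne
  obtain ⟨T, hTS, hTinj, hT⟩ := Finset.exists_subset_injOn_image_eq_of_surjOn
    (S : Set ℚ) (S.image fun a : ℚ => |a|) (f := fun a : ℚ => |a|)
    (by rw [coe_image]; exact Set.surjOn_image _ _)
  have hTS : T ⊆ S := by exact_mod_cast hTS
  have hST : ∀ w ∈ S, primeVal w ∈ affineSpan ℚ (primeVal '' (T : Set ℚ)) := by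
    intro w hw
    have : |w| ∈ T.image fun a : ℚ => |a| := hT ▸ mem_image_of_mem _ hw
    obtain ⟨t, ht, htw⟩ := mem_image.1 this
    rw [← primeVal_eq_of_abs_eq htw]
    exact subset_affineSpan _ _ (Set.mem_image_of_mem _ ht)
  have hAT : ∀ n : ℕ, ∀ w ∈ A, #(A.filter fun a => |w| < |a|) = n →
      primeVal w ∈ affineSpan ℚ (primeVal '' (T : Set ℚ)) := by
    intro n
    induction n using Nat.strong_induction_on with
    | _ n ih =>
      intro w hw hn
      by_cases hwS : w ∈ S
      · exact hST w hwS
      have : ∃ x ∈ A, ∃ y ∈ A, |x| < |v| ∧ |y| < |v| ∧ |x * y| = |v * w| := by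
        by_contra! hcon
        exact hwS (mem_filter.2 ⟨hw, hcon⟩)
      obtain ⟨x, hx, y, hy, hxv, hyv, hxy⟩ := this
      have hxy' := hxy
      rw [abs_mul, abs_mul] at hxy'
      have hx0 : 0 < |x| := abs_pos.2 (hne x hx)
      have hy0 : 0 < |y| := abs_pos.2 (hne y hy)
      have hwx : |w| < |x| := by nlinarith
      have hwy : |w| < |y| := by nlinarith
      have step : ∀ z ∈ A, |w| < |z| → primeVal z ∈ affineSpan ℚ (primeVal '' (T : Set ℚ)) := by
        intro z hz hwz
        refine ih _ ?_ z hz rfl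
        rw [← hn]
        refine card_lt_card (ssubset_iff_of_subset ?_ |>.2 ⟨z, by simp [hz, hwz], by simp⟩)
        intro a ha
        simp only [mem_filter] at ha ⊢
        exact ⟨ha.1, hwz.trans ha.2⟩
      exact primeVal_mem_of_abs_mul_eq (hne x hx) (hne y hy) (hne v hv) (hne w hw) hxy
        (step x hx hwx) (step y hy hwy) (hST v hvS)
  refine ⟨T, hTS.trans (filter_subset _ _), ?_, hTinj, fun w hw => (mem_filter.1 (hTS hw)).2⟩
  have hTne : T.Nonempty := by
    have : |v| ∈ T.image fun a : ℚ => |a| := hT ▸ mem_image_of_mem _ hvS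
    obtain ⟨t, ht, -⟩ := mem_image.1 this
    exact ⟨t, ht⟩
  refine lt_of_le_of_lt (mulDim_le_of_subset_affineSpan ?_) (mulDim_lt_card hTne)
  rintro _ ⟨w, hw, rfl⟩
  exact hAT _ w hw rfl

lemma card_le_two_of_abs_eq {F : Finset ℚ} {v : ℚ} (h : ∀ a ∈ F, |a| = |v|) : #F ≤ 2 := by
  refine (card_le_card (t := {v, -v}) fun a ha => ?_).trans card_le_two
  simpa using abs_eq_abs.1 (h a ha)

/-- Freiman's lemma for the multiplicative group of `ℚ`. -/
theorem freiman_mul_card (n : ℕ) : ∀ A : Finset ℚ, #A = n → (0 : ℚ) ∉ A → ∀ d ≤ mulDim A,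
    (d + 1) * #A ≤ #(A * A) + d * (d + 1) := by
  classical
  induction n using Nat.strong_induction_on with
  | _ n ih =>
  intro A hAn hA0 d hd
  rcases A.eq_empty_or_nonempty with rfl | hA
  · simp
  obtain ⟨v, hv, hmax⟩ := A.exists_max_image (fun a => |a|) hA
  have hne : ∀ a ∈ A, a ≠ 0 := fun a ha h => hA0 (h ▸ ha)
  have hv0 : 0 < |v| := abs_pos.2 (hne v hv)
  set F := A.filter fun a => |a| = |v| with hF
  set A' := A.filter fun a => ¬ |a| = |v| with hA'
  have hcard : #F + #A' = #A := card_filter_add_card_filter_not _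
  have hvF : v ∈ F := by simp [hF, hv]
  have hFpos : 0 < #F := card_pos.2 ⟨v, hvF⟩
  have hF2 : #F ≤ 2 := card_le_two_of_abs_eq (v := v) fun a ha => (mem_filter.1 ha).2
  have hA'A : A' ⊆ A := filter_subset _ _
  have hFA : F ⊆ A := filter_subset _ _
  have hlt : ∀ a ∈ A', |a| < |v| := fun a ha =>
    lt_of_le_of_ne (hmax a (hA'A ha)) (mem_filter.1 ha).2
  have ih' := ih #A' (by omega) A' rfl (fun h => hA0 (hA'A h))
  by_cases hdim : d ≤ mulDim A'
  · have h1 := ih' d hdim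
    obtain ⟨T, hTA, hTcard, hTinj, hT⟩ := exists_injOn_abs_avoiding hA0 hv
    have hFT : #(F * T) = #F * #T := by
      rw [card_mul_iff]
      rintro ⟨f, t⟩ ⟨hf, ht⟩ ⟨f', t'⟩ ⟨hf', ht'⟩ h
      simp only [mem_coe] at hf ht hf' ht' h
      have habs : |f| * |t| = |f'| * |t'| := by rw [← abs_mul, ← abs_mul, h]
      rw [(mem_filter.1 hf).2, (mem_filter.1 hf').2] at habs
      have htt : t = t' := hTinj ht ht' (mul_left_cancel₀ hv0.ne' habs)
      subst htt
      rw [mul_right_cancel₀ (hne t (hTA ht)) h]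
    have hdisj : Disjoint (A' * A') (F * T) := by
      rw [disjoint_left]
      intro z hz hz'
      obtain ⟨x, hx, y, hy, rfl⟩ := mem_mul.1 hz
      obtain ⟨f, hf, t, ht, hft⟩ := mem_mul.1 hz'
      refine hT t ht x (hA'A hx) y (hA'A hy) (hlt x hx) (hlt y hy) ?_
      rw [← hft, abs_mul, abs_mul, (mem_filter.1 hf).2]
    have hsub : #(A' * A') + #(F * T) ≤ #(A * A) := by
      rw [← card_union_of_disjoint hdisj]
      exact card_le_card (union_subset (mul_subset_mul hA'A hA'A) (mul_subset_mul hFA hTA))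
    have : #F * (d + 1) ≤ #F * #T := Nat.mul_le_mul_left _ (by omega)
    rw [← hcard]
    nlinarith
  · push Not at hdim
    obtain ⟨e, rfl⟩ : ∃ e, d = e + 1 := ⟨d - 1, by omega⟩
    have himage : primeVal '' (A : Set ℚ) ⊆ insert (primeVal v) (primeVal '' (A' : Set ℚ)) := by
      rintro _ ⟨a, ha, rfl⟩
      by_cases hav : |a| = |v|
      · exact Or.inl (primeVal_eq_of_abs_eq hav)
      · exact Or.inr ⟨a, by simpa [hA'] using ⟨ha, hav⟩, rfl⟩
    have hle : mulDim A ≤ mulDim A' + 1 := by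
      refine le_trans ?_ (finrank_vectorSpan_insert_le_set ℚ (primeVal '' (A' : Set ℚ))
        (primeVal v))
      have : FiniteDimensional ℚ
          (vectorSpan ℚ (insert (primeVal v) (primeVal '' (A' : Set ℚ)))) :=
        finiteDimensional_vectorSpan_of_finite ℚ ((A'.finite_toSet.image _).insert _)
      exact Submodule.finrank_mono (vectorSpan_mono ℚ himage)
    have hnot : primeVal v ∉ affineSpan ℚ (primeVal '' (A' : Set ℚ)) := by
      intro hmem
      have : mulDim A ≤ mulDim A' := by
        refine mulDim_le_of_subset_affineSpan (himage.trans ?_)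
        exact Set.insert_subset hmem (subset_affineSpan _ _)
      omega
    have h1 := ih' e (by omega)
    have hdisj : Disjoint (A' * A') (A.image (v * ·)) := by
      rw [disjoint_left]
      intro z hz hz'
      obtain ⟨x, hx, y, hy, rfl⟩ := mem_mul.1 hz
      obtain ⟨w, hw, hxy⟩ := mem_image.1 hz'
      have habs : |x * y| = |w * v| := by rw [← hxy, mul_comm]
      by_cases hwv : |w| = |v|
      · rw [abs_mul, abs_mul, hwv] at habs
        exact (mul_lt_mul'' (hlt x hx) (hlt y hy) (abs_nonneg _) (abs_nonneg _)).ne habs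
      · have hmem : ∀ a ∈ A', primeVal a ∈ affineSpan ℚ (primeVal '' (A' : Set ℚ)) :=
          fun a ha => subset_affineSpan _ _ (Set.mem_image_of_mem _ ha)
        exact hnot (primeVal_mem_of_abs_mul_eq (hne x (hA'A hx)) (hne y (hA'A hy)) (hne w hw)
          (hne v hv) habs (hmem x hx) (hmem y hy) (hmem w (mem_filter.2 ⟨hw, hwv⟩)))
    have hsub : #(A' * A') + #A ≤ #(A * A) := by
      rw [← card_image_of_injective A (mul_right_injective₀ (hne v hv)),
        ← card_union_of_disjoint hdisj]
      refine card_le_card (union_subset (mul_subset_mul hA'A hA'A) fun z hz => ?_)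
      obtain ⟨w, hw, rfl⟩ := mem_image.1 hz
      exact mul_mem_mul hv hw
    nlinarith

lemma mulDim_lt_of_card_mul_le {A : Finset ℚ} (hA0 : (0 : ℚ) ∉ A) {K : ℕ}
    (hAA : #(A * A) ≤ K * #A) (hbig : K * (K + 1) < #A) : mulDim A < K := by
  by_contra! h
  have := freiman_mul_card _ A rfl hA0 K h
  nlinarith

/-- Fixing a nonconstant valuation lowers the dimension. -/
lemma mulDim_filter_lt {A : Finset ℚ} {p : Nat.Primes} {a b : ℚ} (ha : a ∈ A) (hb : b ∈ A)
    (hab : padicValRat p a ≠ padicValRat p b) (j : ℤ) :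
    mulDim (A.filter fun x => padicValRat p x = j) < mulDim A := by
  refine Submodule.finrank_lt_finrank_of_lt (lt_of_le_of_ne ?_ ?_)
  · exact vectorSpan_mono ℚ (Set.image_mono (coe_subset.2 (filter_subset _ _)))
  · intro heq
    have hmem : primeVal a -ᵥ primeVal b ∈ vectorSpan ℚ (primeVal '' (A : Set ℚ)) :=
      vsub_mem_vectorSpan ℚ (Set.mem_image_of_mem _ ha) (Set.mem_image_of_mem _ hb)
    have hker : vectorSpan ℚ
        (primeVal '' ((A.filter fun x => padicValRat p x = j : Finset ℚ) : Set ℚ)) ≤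
        LinearMap.ker (LinearMap.proj p : (Nat.Primes → ℚ) →ₗ[ℚ] ℚ) := by
      rw [vectorSpan_def, Submodule.span_le]
      rintro _ ⟨_, ⟨x, hx, rfl⟩, _, ⟨y, hy, rfl⟩, rfl⟩
      simp only [coe_filter, Set.mem_ofPred_eq] at hx hy
      simp [primeVal, hx.2, hy.2]
    rw [← heq] at hmem
    have := hker hmem
    simp only [LinearMap.mem_ker, LinearMap.proj_apply, vsub_eq_sub, Pi.sub_apply, primeVal,
      sub_eq_zero] at this
    exact hab (by exact_mod_cast this)

lemma card_le_two_or_exists_prime {A : Finset ℚ} (hA0 : (0 : ℚ) ∉ A) :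
    #A ≤ 2 ∨ ∃ p : Nat.Primes, ∃ a ∈ A, ∃ b ∈ A, padicValRat p a ≠ padicValRat p b := by
  by_contra! h
  obtain ⟨h2, h⟩ := h
  obtain ⟨v, hv⟩ : A.Nonempty := card_pos.1 (by omega)
  refine h2.not_ge (card_le_two_of_abs_eq (v := v) fun a ha => ?_)
  refine abs_eq_of_primeVal_eq (fun h => hA0 (h ▸ ha)) (fun h => hA0 (h ▸ hv)) ?_
  funext p
  simp [primeVal, h p a ha v hv]

lemma exists_padicValRat_eq_of_sum_eq_zero {ι : Type*} [Fintype ι] [Nonempty ι] (p : ℕ)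
    [Fact p.Prime] {y : ι → ℚ} (hy : ∀ i, y i ≠ 0) (hsum : ∑ i, y i = 0) :
    ∃ s t, s ≠ t ∧ padicValRat p (y s) = padicValRat p (y t) := by
  classical
  by_contra! hcon
  obtain ⟨i, -, hi⟩ := univ.exists_max_image (fun i => padicNorm p (y i)) univ_nonempty
  have hp : (1 : ℚ) < p := by exact_mod_cast (Fact.out : p.Prime).one_lt
  have hlt : ∀ j ∈ univ.erase i, padicNorm p (y j) < padicNorm p (y i) := by
    intro j hj
    refine lt_of_le_of_ne (hi j (mem_univ j)) fun h => hcon j i (ne_of_mem_erase hj) ?_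
    rw [padicNorm.eq_zpow_of_nonzero (hy j), padicNorm.eq_zpow_of_nonzero (hy i)] at h
    have := zpow_right_injective₀ (zero_lt_one.trans hp) hp.ne' h
    simpa using this
  have h0 : 0 < padicNorm p (y i) :=
    lt_of_le_of_ne (padicNorm.nonneg _) (Ne.symm (padicNorm.nonzero (hy i)))
  have h1 := padicNorm.sum_lt' hlt h0
  have h2 : ∑ j ∈ univ.erase i, y j = - y i := by
    rw [← sum_erase_add _ _ (mem_univ i)] at hsum
    linarith
  rw [h2, padicNorm.neg] at h1
  exact h1.false

lemma exists_nat_mul_eq_intCast (S : Finset ℚ) :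
    ∃ D : ℕ, 0 < D ∧ ∀ s ∈ S, ∃ z : ℤ, (D : ℚ) * s = z := by
  classical
  refine ⟨∏ s ∈ S, s.den, prod_pos fun s _ => s.den_pos, fun s hs => ?_⟩
  refine ⟨(∏ t ∈ S.erase s, t.den : ℕ) * s.num, ?_⟩
  rw [← prod_erase_mul _ _ hs]
  push_cast
  rw [mul_assoc, Rat.den_mul_eq_num]

lemma sum_exp_two_pi_mul_div {M : ℕ} {z : ℤ} (hz : z ≠ 0) (hzM : |z| < M) :
    ∑ r : Fin M, Complex.exp (2 * Real.pi * Complex.I * z / M) ^ (r : ℕ) = 0 := by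
  have hM : (M : ℂ) ≠ 0 := by
    have : (0 : ℤ) < M := (abs_nonneg z).trans_lt hzM
    exact_mod_cast this.ne'
  rw [Fin.sum_univ_eq_sum_range (fun r => Complex.exp (2 * Real.pi * Complex.I * z / M) ^ r)]
  have hne : Complex.exp (2 * Real.pi * Complex.I * z / M) ≠ 1 := by
    intro h
    obtain ⟨n, hn⟩ := Complex.exp_eq_one_iff.1 h
    have h2 : (z : ℂ) = n * M := by
      have hpi := Complex.two_pi_I_ne_zero
      rw [div_eq_iff hM] at hn
      refine mul_left_cancel₀ hpi ?_
      linear_combination hn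
    have h3 : z = n * M := by exact_mod_cast h2
    exact hz (Int.eq_zero_of_abs_lt_dvd ⟨n, by rw [h3, mul_comm]⟩ hzM)
  rw [geom_sum_eq hne, ← Complex.exp_nat_mul]
  have : (M : ℂ) * (2 * Real.pi * Complex.I * z / M) = z * (2 * Real.pi * Complex.I) := by
    field_simp
  rw [this, Complex.exp_int_mul_two_pi_mul_I, sub_self, zero_div]

/-- Finitely many characters of `ℚ` whose average detects `0` inside a given finite set. -/
lemma exists_detecting_characters (S : Finset ℚ) :
    ∃ (M : ℕ) (χ : Fin M → AddChar ℚ Circle), 0 < M ∧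
      ∀ s ∈ S, ∑ r, (χ r s : ℂ) = if s = 0 then (M : ℂ) else 0 := by
  obtain ⟨D, hD, hDS⟩ := exists_nat_mul_eq_intCast S
  choose! z hz using hDS
  set M : ℕ := (∑ s ∈ S, |z s|).toNat + 1 with hM
  have hzM : ∀ s ∈ S, |z s| < M := by
    intro s hs
    have := single_le_sum (f := fun s => |z s|) (fun i _ => abs_nonneg (z i)) hs
    omega
  refine ⟨M, fun r => Real.fourierChar.compAddMonoidHom
    ((AddMonoidHom.mulLeft ((r : ℝ) * D / M)).comp (Rat.castHom ℝ).toAddMonoidHom),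
    by omega, fun s hs => ?_⟩
  have hval : ∀ r : Fin M, ((Real.fourierChar.compAddMonoidHom
      ((AddMonoidHom.mulLeft ((r : ℝ) * D / M)).comp (Rat.castHom ℝ).toAddMonoidHom) s :
        Circle) : ℂ) = Complex.exp (2 * Real.pi * Complex.I * (z s) / M) ^ (r : ℕ) := by
    intro r
    have hzc : (D : ℂ) * (s : ℂ) = (z s : ℂ) := by
      exact_mod_cast congrArg (Rat.cast : ℚ → ℂ) (hz s hs)
    rw [AddChar.coe_compAddMonoidHom, Function.comp_apply, Real.fourierChar_apply,
      ← Complex.exp_nat_mul, ← hzc]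
    congr 1
    simp
    ring
  simp only [hval]
  split_ifs with h
  · have : z s = 0 := by
      have := hz s hs
      simp only [h, mul_zero] at this ⊢
      exact_mod_cast this.symm
    simp [this]
  · refine sum_exp_two_pi_mul_div ?_ (hzM s hs)
    intro h0
    have := hz s hs
    rw [h0, Int.cast_zero, mul_eq_zero] at this
    rcases this with h' | h'
    · exact hD.ne' (by exact_mod_cast h')
    · exact h h'

/-- The signs `+1` on the first and `-1` on the second block of variables. -/
def energySign {k : ℕ} : Fin k ⊕ Fin k → ℚ := Sum.elim (fun _ => 1) (fun _ => -1)

/-- Solutions of `x₁ + ⋯ + x_k = x_{k+1} + ⋯ + x_{2k}` with `x_i ∈ B i`. -/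
def energySolutions {k : ℕ} (B : Fin k ⊕ Fin k → Finset ℚ) : Finset (Fin k ⊕ Fin k → ℚ) :=
  (Fintype.piFinset B).filter fun x => ∑ i, energySign i * x i = 0

lemma addEnergy_eq_card_energySolutions (k : ℕ) (A : Finset ℚ) :
    addEnergy k A = #(energySolutions fun _ : Fin k ⊕ Fin k => A) := by
  symm
  refine card_equiv (Equiv.sumArrowEquivProdArrow _ _ _) fun x => ?_
  simp [energySolutions, energySign, Fintype.sum_sum_type, Equiv.sumArrowEquivProdArrow,
    Fintype.mem_piFinset, ← sub_eq_add_neg, sub_eq_zero]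

lemma addEnergy_le_card_pow (k : ℕ) (A : Finset ℚ) : addEnergy k A ≤ #A ^ (2 * k) := by
  refine (card_filter_le _ _).trans ?_
  simp [Fintype.card_piFinset, two_mul, pow_add]

/-- The exponential sum over `B`. -/
noncomputable def expSum (χ : AddChar ℚ Circle) (B : Finset ℚ) : ℂ := ∑ a ∈ B, (χ a : ℂ)

lemma sum_energySign_inl {k : ℕ} (χ : AddChar ℚ Circle) (B : Finset ℚ) (i : Fin k) :
    ∑ a ∈ B, (χ (energySign (Sum.inl i : Fin k ⊕ Fin k) * a) : ℂ) = expSum χ B := by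
  simp [energySign, expSum]

lemma sum_energySign_inr {k : ℕ} (χ : AddChar ℚ Circle) (B : Finset ℚ) (i : Fin k) :
    ∑ a ∈ B, (χ (energySign (Sum.inr i : Fin k ⊕ Fin k) * a) : ℂ) =
      (starRingEnd ℂ) (expSum χ B) := by
  simp only [energySign, expSum, Sum.elim_inr, neg_one_mul, map_sum, AddChar.map_neg_eq_inv,
    Circle.coe_inv_eq_conj]

lemma norm_sum_energySign {k : ℕ} (χ : AddChar ℚ Circle) (B : Finset ℚ) (i : Fin k ⊕ Fin k) :
    ‖∑ a ∈ B, (χ (energySign i * a) : ℂ)‖ = ‖expSum χ B‖ := by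
  rcases i with i | i
  · rw [sum_energySign_inl]
  · rw [sum_energySign_inr, RCLike.norm_conj]

lemma card_energySolutions_mul {k M : ℕ} (χ : Fin M → AddChar ℚ Circle)
    (B : Fin k ⊕ Fin k → Finset ℚ)
    (hχ : ∀ x ∈ Fintype.piFinset B, ∑ r, (χ r (∑ i, energySign i * x i) : ℂ) =
      if ∑ i, energySign i * x i = 0 then (M : ℂ) else 0) :
    (#(energySolutions B) : ℂ) * M =
      ∑ r, ∏ i, ∑ a ∈ B i, (χ r (energySign i * a) : ℂ) := by
  have h : ∀ r, ∏ i, ∑ a ∈ B i, (χ r (energySign i * a) : ℂ) =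
      ∑ x ∈ Fintype.piFinset B, (χ r (∑ i, energySign i * x i) : ℂ) := by
    intro r
    rw [prod_univ_sum]
    refine sum_congr rfl fun x _ => ?_
    have : χ r (∑ i, energySign i * x i) = ∏ i, χ r (energySign i * x i) := by
      exact map_prod (χ r).toMonoidHom (fun i => Multiplicative.ofAdd (energySign i * x i)) univ
    rw [this]
    exact (map_prod Circle.coeHom _ _).symm
  simp only [h]
  rw [sum_comm, sum_congr rfl hχ, ← sum_filter, sum_const, nsmul_eq_mul]
  rfl

lemma exists_characters_energySolutions (k : ℕ) (A : Finset ℚ) :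
    ∃ (M : ℕ) (χ : Fin M → AddChar ℚ Circle), 0 < M ∧
      (∀ B ⊆ A, (addEnergy k B : ℝ) * M = ∑ r, ‖expSum (χ r) B‖ ^ (2 * k)) ∧
      ∀ B : Fin k ⊕ Fin k → Finset ℚ, (∀ i, B i ⊆ A) →
        (#(energySolutions B) : ℝ) * M ≤ ∑ r, ∏ i, ‖expSum (χ r) (B i)‖ := by
  classical
  obtain ⟨M, χ, hM, hχ⟩ := exists_detecting_characters
    ((Fintype.piFinset fun _ : Fin k ⊕ Fin k => A).image fun x => ∑ i, energySign i * x i)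
  have key : ∀ B : Fin k ⊕ Fin k → Finset ℚ, (∀ i, B i ⊆ A) →
      (#(energySolutions B) : ℂ) * M =
        ∑ r, ∏ i, ∑ a ∈ B i, (χ r (energySign i * a) : ℂ) := fun B hB =>
    card_energySolutions_mul χ B fun x hx =>
      hχ _ (mem_image_of_mem _ (Fintype.piFinset_subset _ _ hB hx))
  refine ⟨M, χ, hM, fun B hB => ?_, fun B hB => ?_⟩
  · have := key (fun _ => B) fun _ => hB
    rw [← addEnergy_eq_card_energySolutions] at this
    simp only [Fintype.prod_sum_type, sum_energySign_inl, sum_energySign_inr, prod_const,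
      card_univ, Fintype.card_fin, ← mul_pow, Complex.mul_conj'] at this
    simp only [pow_mul]
    exact_mod_cast this
  · have := congrArg norm (key B hB)
    rw [norm_mul, Complex.norm_natCast, Complex.norm_natCast] at this
    rw [this]
    refine (norm_sum_le _ _).trans (sum_le_sum fun r _ => ?_)
    rw [norm_prod]
    simp only [norm_sum_energySign, le_refl]

/-- Hölder's inequality for `∑ f² g^{2k-2}`. -/
lemma sum_sq_mul_pow_le {ι : Type*} (s : Finset ι) {f g : ι → ℝ}
    (hg : ∀ i, 0 ≤ g i) {k : ℕ} (hk : 2 ≤ k) :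
    ∑ i ∈ s, f i ^ 2 * g i ^ (2 * k - 2) ≤
      (∑ i ∈ s, f i ^ (2 * k)) ^ (1 / (k : ℝ)) *
        (∑ i ∈ s, g i ^ (2 * k)) ^ (1 - 1 / (k : ℝ)) := by
  have hk1 : (1 : ℝ) < k := by exact_mod_cast hk
  have hk0 : (0 : ℝ) < k := by linarith
  have hpq := Real.HolderConjugate.conjExponent hk1
  have := Real.inner_le_Lp_mul_Lq_of_nonneg s hpq (f := fun i => f i ^ 2)
    (g := fun i => g i ^ (2 * k - 2)) (fun i _ => by positivity)
    (fun i _ => pow_nonneg (hg i) _)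
  refine this.trans (le_of_eq ?_)
  have e1 : ∀ i, (f i ^ 2) ^ (k : ℝ) = f i ^ (2 * k) := fun i => by
    rw [Real.rpow_natCast, pow_mul]
  have e2 : ∀ i, (g i ^ (2 * k - 2)) ^ (Real.conjExponent (k : ℝ)) = g i ^ (2 * k) := fun i => by
    rw [← Real.rpow_natCast, ← Real.rpow_natCast, ← Real.rpow_mul (hg i)]
    congr 1
    rw [Real.conjExponent, Nat.cast_sub (by omega)]
    have : (k : ℝ) - 1 ≠ 0 := by linarith
    push_cast
    field_simp
  have e3 : 1 / Real.conjExponent (k : ℝ) = 1 - 1 / (k : ℝ) := by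
    rw [Real.conjExponent]
    have : (k : ℝ) - 1 ≠ 0 := by linarith
    field_simp
  simp only [e1, e2, e3]

lemma card_energySolutions_ite_le {k : ℕ} (hk : 2 ≤ k) {A B : Finset ℚ} (hBA : B ⊆ A)
    {P : Finset (Fin k ⊕ Fin k)} (hP : #P = 2) :
    (#(energySolutions fun i => if i ∈ P then B else A) : ℝ) ≤
      (addEnergy k B : ℝ) ^ (1 / (k : ℝ)) * (addEnergy k A : ℝ) ^ (1 - 1 / (k : ℝ)) := by
  obtain ⟨M, χ, hM, hE, hle⟩ := exists_characters_energySolutions k A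
  have hM' : (0 : ℝ) < M := by exact_mod_cast hM
  have h1 := hle (fun i => if i ∈ P then B else A) fun i => by
    split_ifs
    · exact hBA
    · exact Subset.rfl
  have h2 : ∀ r, ∏ i, ‖expSum (χ r) (if i ∈ P then B else A)‖ =
      ‖expSum (χ r) B‖ ^ 2 * ‖expSum (χ r) A‖ ^ (2 * k - 2) := by
    intro r
    have hc : #(univ.filter fun i => i ∉ P) = 2 * k - 2 := by
      rw [filter_not, filter_mem_eq_inter, univ_inter, card_sdiff_of_subset (subset_univ _), hP,
        card_univ, Fintype.card_sum, Fintype.card_fin, two_mul]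
    have hc' : #(univ.filter fun i => i ∈ P) = 2 := by
      rw [filter_mem_eq_inter, univ_inter, hP]
    simp only [apply_ite (fun X => ‖expSum (χ r) X‖)]
    rw [prod_ite, prod_const, prod_const, hc, hc']
  simp only [h2] at h1
  have h3 := sum_sq_mul_pow_le univ (f := fun r => ‖expSum (χ r) B‖)
    (g := fun r => ‖expSum (χ r) A‖) (fun _ => norm_nonneg _) hk
  rw [← hE B hBA, ← hE A Subset.rfl, Real.mul_rpow (by positivity) hM'.le,
    Real.mul_rpow (by positivity) hM'.le] at h3
  have h4 : (M : ℝ) ^ (1 / (k : ℝ)) * (M : ℝ) ^ (1 - 1 / (k : ℝ)) = M := by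
    rw [← Real.rpow_add hM', add_sub_cancel, Real.rpow_one]
  refine le_of_mul_le_mul_right (h1.trans (h3.trans (le_of_eq ?_))) hM'
  conv_rhs => rw [← h4]
  ring

lemma addEnergy_rpow_le_sum {k : ℕ} (hk : 2 ≤ k) {A : Finset ℚ} (hA0 : (0 : ℚ) ∉ A) (p : ℕ)
    [Fact p.Prime] :
    (addEnergy k A : ℝ) ^ (1 / (k : ℝ)) ≤ (2 * (k : ℝ) ^ 2 - k) *
      ∑ j ∈ A.image (padicValRat p),
        (addEnergy k (A.filter fun a => padicValRat p a = j) : ℝ) ^ (1 / (k : ℝ)) := by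
  classical
  have hk0 : (0 : ℝ) < k := by exact_mod_cast (by omega : 0 < k)
  have hkk : (0 : ℝ) ≤ 2 * (k : ℝ) ^ 2 - k := by
    have : (2 : ℝ) ≤ k := by exact_mod_cast hk
    nlinarith
  have : Nonempty (Fin k ⊕ Fin k) := ⟨Sum.inl ⟨0, by omega⟩⟩
  rcases Nat.eq_zero_or_pos (addEnergy k A) with h0 | hpos
  · rw [h0, Nat.cast_zero, Real.zero_rpow (by positivity)]
    exact mul_nonneg hkk (sum_nonneg fun j _ => Real.rpow_nonneg (Nat.cast_nonneg _) _)
  set I := (univ : Finset (Fin k ⊕ Fin k)).powersetCard 2 with hI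
  have hsub : energySolutions (fun _ : Fin k ⊕ Fin k => A) ⊆
      I.biUnion fun P => (A.image (padicValRat p)).biUnion fun j =>
        energySolutions fun i => if i ∈ P then A.filter (fun a => padicValRat p a = j) else A := by
    intro x hx
    obtain ⟨hxA, hsum⟩ := mem_filter.1 hx
    rw [Fintype.mem_piFinset] at hxA
    have hε : ∀ i, padicValRat p (energySign i * x i) = padicValRat p (x i) := by
      rintro (i | i) <;> simp [energySign]
    obtain ⟨s, t, hst, hval⟩ := exists_padicValRat_eq_of_sum_eq_zero p
      (y := fun i => energySign i * x i) (fun i => by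
        have : x i ≠ 0 := fun h => hA0 (h ▸ hxA i)
        rcases i with i | i <;> simpa [energySign] using this) hsum
    rw [hε, hε] at hval
    refine mem_biUnion.2 ⟨{s, t}, mem_powersetCard.2 ⟨subset_univ _, card_pair hst⟩, ?_⟩
    refine mem_biUnion.2 ⟨padicValRat p (x s), mem_image_of_mem _ (hxA s), ?_⟩
    refine mem_filter.2 ⟨Fintype.mem_piFinset.2 fun i => ?_, hsum⟩
    split_ifs with hi
    · rw [mem_insert, mem_singleton] at hi
      rcases hi with rfl | rfl
      · exact mem_filter.2 ⟨hxA _, rfl⟩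
      · exact mem_filter.2 ⟨hxA _, hval.symm⟩
    · exact hxA i
  have hcount : (addEnergy k A : ℝ) ≤ (2 * (k : ℝ) ^ 2 - k) *
      (∑ j ∈ A.image (padicValRat p),
        (addEnergy k (A.filter fun a => padicValRat p a = j) : ℝ) ^ (1 / (k : ℝ))) *
        (addEnergy k A : ℝ) ^ (1 - 1 / (k : ℝ)) := by
    have h1 : (addEnergy k A : ℝ) ≤ ∑ P ∈ I, ∑ j ∈ A.image (padicValRat p),
        (#(energySolutions fun i =>
          if i ∈ P then A.filter (fun a => padicValRat p a = j) else A) : ℝ) := by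
      rw [addEnergy_eq_card_energySolutions]
      exact_mod_cast (card_le_card hsub).trans
        (card_biUnion_le.trans (sum_le_sum fun P _ => card_biUnion_le))
    refine h1.trans ((sum_le_sum fun P hP => sum_le_sum fun j _ =>
      card_energySolutions_ite_le hk (filter_subset _ _) (mem_powersetCard.1 hP).2).trans
        (le_of_eq ?_))
    have hcard : (#I : ℝ) = 2 * (k : ℝ) ^ 2 - k := by
      rw [hI, card_powersetCard, card_univ, Fintype.card_sum, Fintype.card_fin,
        Nat.cast_choose_two]
      push_cast
      ring
    rw [sum_const, nsmul_eq_mul, hcard, ← sum_mul, mul_assoc]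
  have hpos' : (0 : ℝ) < addEnergy k A := by exact_mod_cast hpos
  have hsplit : (addEnergy k A : ℝ) =
      (addEnergy k A : ℝ) ^ (1 / (k : ℝ)) * (addEnergy k A : ℝ) ^ (1 - 1 / (k : ℝ)) := by
    rw [← Real.rpow_add hpos', add_sub_cancel, Real.rpow_one]
  refine le_of_mul_le_mul_right ?_ (Real.rpow_pos_of_pos hpos' (1 - 1 / (k : ℝ)))
  rw [← hsplit]
  exact hcount

lemma addEnergy_rpow_le_card_sq {k : ℕ} (hk : 0 < k) (A : Finset ℚ) :
    (addEnergy k A : ℝ) ^ (1 / (k : ℝ)) ≤ (#A : ℝ) ^ 2 := by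
  have h : (addEnergy k A : ℝ) ≤ ((#A : ℝ) ^ 2) ^ k := by
    rw [← pow_mul]
    exact_mod_cast addEnergy_le_card_pow k A
  refine (Real.rpow_le_rpow (by positivity) h (by positivity)).trans (le_of_eq ?_)
  rw [one_div, Real.pow_rpow_inv_natCast (by positivity) hk.ne']

lemma addEnergy_rpow_le_of_mulDim {k : ℕ} (hk : 2 ≤ k) (d : ℕ) :
    ∀ A : Finset ℚ, (0 : ℚ) ∉ A → mulDim A ≤ d →
      (addEnergy k A : ℝ) ^ (1 / (k : ℝ)) ≤ 2 * (2 * (k : ℝ) ^ 2 - k) ^ d * #A := by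
  have hC : (1 : ℝ) ≤ 2 * (k : ℝ) ^ 2 - k := by
    have : (2 : ℝ) ≤ k := by exact_mod_cast hk
    nlinarith
  induction d with
  | zero =>
    intro A hA0 hdim
    rcases card_le_two_or_exists_prime hA0 with h2 | ⟨p, a, ha, b, hb, hab⟩
    · refine (addEnergy_rpow_le_card_sq (by omega) A).trans ?_
      have : (#A : ℝ) ≤ 2 := by exact_mod_cast h2
      rw [pow_zero, mul_one, sq]
      gcongr
    · have := mulDim_filter_lt ha hb hab 0
      omega
  | succ d ih =>
    intro A hA0 hdim
    rcases card_le_two_or_exists_prime hA0 with h2 | ⟨p, a, ha, b, hb, hab⟩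
    · refine (addEnergy_rpow_le_card_sq (by omega) A).trans ?_
      have h2' : (#A : ℝ) ≤ 2 := by exact_mod_cast h2
      rw [sq]
      gcongr
      exact h2'.trans (le_mul_of_one_le_right zero_le_two (one_le_pow₀ hC))
    · have : Fact (p : ℕ).Prime := ⟨p.2⟩
      refine (addEnergy_rpow_le_sum hk hA0 p).trans ?_
      have hcard : (#A : ℝ) = ∑ j ∈ A.image (padicValRat p),
          (#(A.filter fun a => padicValRat p a = j) : ℝ) := by
        exact_mod_cast card_eq_sum_card_image (padicValRat p) A
      calc (2 * (k : ℝ) ^ 2 - k) * ∑ j ∈ A.image (padicValRat p),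
            (addEnergy k (A.filter fun a => padicValRat p a = j) : ℝ) ^ (1 / (k : ℝ))
          ≤ (2 * (k : ℝ) ^ 2 - k) * ∑ j ∈ A.image (padicValRat p),
            2 * (2 * (k : ℝ) ^ 2 - k) ^ d * #(A.filter fun a => padicValRat p a = j) := by
            refine mul_le_mul_of_nonneg_left (sum_le_sum fun j _ => ?_) (by linarith)
            refine ih _ (fun h => hA0 (filter_subset _ _ h)) ?_
            have := mulDim_filter_lt ha hb hab j
            omega
        _ = 2 * (2 * (k : ℝ) ^ 2 - k) ^ (d + 1) * #A := by
            rw [← mul_sum, ← hcard]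
            ring

lemma mul_succ_lt_six_pow (K : ℕ) : K * (K + 1) < 6 ^ K := by
  induction K with
  | zero => simp
  | succ n ih =>
    rcases n with _ | n
    · simp
    · rw [pow_succ]
      nlinarith

theorem chang_additive_energy_bound
    (A : Finset ℚ) (hA0 : (0 : ℚ) ∉ A)
    (K : ℕ) (hK : 0 < K) (hAA : (A * A).card ≤ K * A.card)
    (k : ℕ) (hk : 2 ≤ k) :
    (addEnergy k A : ℝ) ≤ (A.card : ℝ) ^ k * (2 * (k : ℝ) ^ 2 - (k : ℝ)) ^ (k * K) := by
  have hC : (6 : ℝ) ≤ 2 * (k : ℝ) ^ 2 - k := by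
    have : (2 : ℝ) ≤ k := by exact_mod_cast hk
    nlinarith
  have hroot : (addEnergy k A : ℝ) ^ (1 / (k : ℝ)) ≤ (2 * (k : ℝ) ^ 2 - k) ^ K * #A := by
    by_cases hsmall : (#A : ℝ) ≤ (2 * (k : ℝ) ^ 2 - k) ^ K
    · refine (addEnergy_rpow_le_card_sq (by omega) A).trans ?_
      rw [sq]
      gcongr
    · have h6 : ((6 ^ K : ℕ) : ℝ) < #A := by
        push_cast
        exact (pow_le_pow_left₀ (by norm_num) hC K).trans_lt (not_le.1 hsmall)
      have hbig : K * (K + 1) < #A := (mul_succ_lt_six_pow K).trans (by exact_mod_cast h6)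
      have hdim := mulDim_lt_of_card_mul_le hA0 hAA hbig
      obtain ⟨n, rfl⟩ : ∃ n, K = n + 1 := ⟨K - 1, by omega⟩
      refine (addEnergy_rpow_le_of_mulDim hk n A hA0 (by omega)).trans ?_
      refine mul_le_mul_of_nonneg_right ?_ (Nat.cast_nonneg _)
      rw [pow_succ' _ n]
      exact mul_le_mul_of_nonneg_right (by linarith) (pow_nonneg (by linarith) n)
  have hpow := pow_le_pow_left₀ (Real.rpow_nonneg (Nat.cast_nonneg _) _) hroot k
  rw [one_div, Real.rpow_inv_natCast_pow (Nat.cast_nonneg _) (by omega)] at hpow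
  refine hpow.trans (le_of_eq ?_)
  rw [mul_pow, ← pow_mul, mul_comm K k, mul_comm]
end

section
/- (Garaev–Shen) There exists an absolute constant c > 0 such that for every finite set A of real numbers, max{|AA|, |(A+1)(A+1)|} ≥ c |A|^{5/4}. -/
open Finset Pointwise

/-- The number of elements of `T` below `x`. -/
noncomputable def rankIn (T : Finset ℝ) (x : ℝ) : ℤ := #{t ∈ T | t < x}

lemma rankIn_monotone (T : Finset ℝ) : Monotone (rankIn T) := fun x y hxy => by
  unfold rankIn
  exact_mod_cast card_le_card (monotone_filter_right T fun t _ ht => lt_of_lt_of_le ht hxy)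

lemma rankIn_nonneg (T : Finset ℝ) (x : ℝ) : 0 ≤ rankIn T x := by
  unfold rankIn
  positivity

lemma rankIn_le_card (T : Finset ℝ) (x : ℝ) : rankIn T x ≤ #T := by
  unfold rankIn
  exact_mod_cast card_filter_le _ _

lemma rankIn_strictMonoOn (T : Finset ℝ) : StrictMonoOn (rankIn T) T := fun x hx y _ hxy => by
  unfold rankIn
  have : #{t ∈ T | t < x} < #{t ∈ T | t < y} := by
    apply card_lt_card
    refine (ssubset_iff_of_subset (monotone_filter_right T fun t _ ht => ht.trans hxy)).2
      ⟨x, ?_, ?_⟩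
    · simpa using ⟨hx, hxy⟩
    · simp
  exact_mod_cast this

/-- Pairs of elements of `T` whose ranks in `T` differ by less than `m`. -/
noncomputable def closePairs (T : Finset ℝ) (m : ℕ) : Finset (ℝ × ℝ) :=
  {p ∈ T ×ˢ T | |rankIn T p.2 - rankIn T p.1| < m}

lemma card_closePairs_le (T : Finset ℝ) (m : ℕ) : #(closePairs T m) ≤ #T * (2 * m) := by
  have hcard : #(Ioo (-(m : ℤ)) m) ≤ 2 * m := by
    rw [Int.card_Ioo]
    omega
  calc #(closePairs T m) ≤ #(T ×ˢ Ioo (-(m : ℤ)) m) := by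
        refine card_le_card_of_injOn (fun p => (p.1, rankIn T p.2 - rankIn T p.1)) ?_ ?_
        · intro p hp
          simp only [closePairs, coe_filter, mem_product, Set.mem_ofPred_eq] at hp
          simp only [coe_product, Set.mem_prod, mem_coe, mem_Ioo]
          exact ⟨hp.1.1, abs_lt.1 hp.2⟩
        · rintro ⟨x, y⟩ hp ⟨x', y'⟩ hq h
          simp only [closePairs, coe_filter, mem_product, Set.mem_ofPred_eq] at hp hq
          simp only [Prod.mk.injEq] at h
          obtain ⟨rfl, h⟩ := h
          rw [(rankIn_strictMonoOn T).injOn hp.1.2 hq.1.2 (by linarith)]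
    _ = #T * #(Ioo (-(m : ℤ)) m) := card_product _ _
    _ ≤ #T * (2 * m) := Nat.mul_le_mul_left _ hcard

/-- A monotone integer sequence with values in `[0, K]` has few jumps of size at least `m`. -/
lemma mul_card_jumps_le_of_monotone {r : ℕ → ℤ} (hr : Monotone r) {K : ℕ}
    (h0 : ∀ i, 0 ≤ r i) (hK : ∀ i, r i ≤ K) (N m : ℕ) :
    m * #{i ∈ range N | (m : ℤ) ≤ |r (i + 1) - r i|} ≤ K := by
  have h : (m * #{i ∈ range N | (m : ℤ) ≤ |r (i + 1) - r i|} : ℤ) ≤ K := by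
    calc (m * #{i ∈ range N | (m : ℤ) ≤ |r (i + 1) - r i|} : ℤ)
        = ∑ i ∈ range N with (m : ℤ) ≤ |r (i + 1) - r i|, (m : ℤ) := by
          rw [sum_const, nsmul_eq_mul, mul_comm]
      _ ≤ ∑ i ∈ range N with (m : ℤ) ≤ |r (i + 1) - r i|, (r (i + 1) - r i) := by
          refine sum_le_sum fun i hi => ?_
          have hi := (mem_filter.1 hi).2
          rwa [abs_of_nonneg (sub_nonneg.2 (hr i.le_succ))] at hi
      _ ≤ ∑ i ∈ range N, (r (i + 1) - r i) :=
          sum_le_sum_of_subset_of_nonneg (filter_subset _ _)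
            fun i _ _ => sub_nonneg.2 (hr i.le_succ)
      _ = r N - r 0 := sum_range_sub r N
      _ ≤ K := by linarith [h0 0, hK N]
  exact_mod_cast h

lemma mul_card_jumps_le_of_antitone {r : ℕ → ℤ} (hr : Antitone r) {K : ℕ}
    (h0 : ∀ i, 0 ≤ r i) (hK : ∀ i, r i ≤ K) (N m : ℕ) :
    m * #{i ∈ range N | (m : ℤ) ≤ |r (i + 1) - r i|} ≤ K := by
  have h := mul_card_jumps_le_of_monotone (r := fun i => K - r i)
    (fun i j hij => sub_le_sub_left (hr hij) _) (fun i => sub_nonneg.2 (hK i))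
    (fun i => sub_le_self _ (h0 i)) N m
  simpa only [sub_sub_sub_cancel_left, abs_sub_comm] using h

/-- If the jump threshold `m` is large, a dilate of a monotone sequence has few indices at which
consecutive terms are far apart in `T`. -/
lemma four_mul_card_jumps_le {T : Finset ℝ} {K m N : ℕ} (hT : #T ≤ K) (hm : 0 < m)
    (hmN : 4 * K ≤ m * N) {c : ℕ → ℝ} (hc : Monotone c) (a : ℝ) :
    4 * #{i ∈ range N | (m : ℤ) ≤ |rankIn T (a * c (i + 1)) - rankIn T (a * c i)|} ≤ N := by
  have h0 : ∀ i, 0 ≤ rankIn T (a * c i) := fun i => rankIn_nonneg _ _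
  have hK : ∀ i, rankIn T (a * c i) ≤ K := fun i =>
    (rankIn_le_card _ _).trans (by exact_mod_cast hT)
  have h : m * #{i ∈ range N | (m : ℤ) ≤ |rankIn T (a * c (i + 1)) - rankIn T (a * c i)|} ≤ K := by
    rcases le_total 0 a with ha | ha
    · exact mul_card_jumps_le_of_monotone (r := fun i => rankIn T (a * c i))
        (fun i j hij => rankIn_monotone T (mul_le_mul_of_nonneg_left (hc hij) ha)) h0 hK N m
    · exact mul_card_jumps_le_of_antitone (r := fun i => rankIn T (a * c i))
        (fun i j hij => rankIn_monotone T (mul_le_mul_of_nonpos_left (hc hij) ha)) h0 hK N m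
  refine Nat.le_of_mul_le_mul_left ?_ hm
  linarith

/-- A set of `N + 1` reals is enumerated by a sequence that increases strictly up to index `N`. -/
lemma exists_monotone_enumeration {B : Finset ℝ} {N : ℕ} (hB : #B = N + 1) :
    ∃ c : ℕ → ℝ, Monotone c ∧ (∀ i, c i ∈ B) ∧ ∀ i < N, c i < c (i + 1) := by
  refine ⟨fun i => B.orderEmbOfFin hB ⟨min i N, by omega⟩, fun i j hij => ?_, fun i => ?_,
    fun i hi => ?_⟩
  · refine (B.orderEmbOfFin hB).monotone ?_
    simp only [Fin.mk_le_mk]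
    omega
  · exact orderEmbOfFin_mem _ _ _
  · refine (B.orderEmbOfFin hB).strictMono ?_
    simp only [Fin.mk_lt_mk]
    omega

/-- A dilation factor `a`, a shifted dilation factor `b` and two distinct points `x, y` are
determined by `a x, a y, b (x + 1), b (y + 1)`. -/
lemma dilations_injective {a b x y a' b' x' y' : ℝ} (ha : a ≠ 0) (hb : b ≠ 0)
    (ha' : a' ≠ 0) (hxy : x ≠ y) (h₁ : a * x = a' * x') (h₂ : a * y = a' * y')
    (h₃ : b * (x + 1) = b' * (x' + 1)) (h₄ : b * (y + 1) = b' * (y' + 1)) :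
    a = a' ∧ b = b' ∧ x = x' := by
  have hxy' : x - y ≠ 0 := sub_ne_zero.2 hxy
  have hab : a * b' = a' * b := by
    have e₁ : a * (x - y) = a' * (x' - y') := by linarith
    have e₂ : b * (x - y) = b' * (x' - y') := by linarith
    apply mul_right_cancel₀ hxy'
    linear_combination b' * e₁ - a' * e₂
  have hbb : b = b' := by
    apply mul_left_cancel₀ ha'
    linear_combination a' * h₃ - b' * h₁ + x * hab
  subst hbb
  have haa : a = a' := mul_right_cancel₀ hb hab
  subst haa
  exact ⟨rfl, rfl, mul_left_cancel₀ ha h₁⟩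

lemma card_sq_mul_le {B : Finset ℝ} (h0 : (0 : ℝ) ∉ B) (h1 : (-1 : ℝ) ∉ B) {N K m : ℕ}
    (hB : #B = N + 1) (hm : 0 < m) (hmN : 4 * K ≤ m * N) (hK : #(B * B) ≤ K)
    (hK' : #((B.image fun a => a + 1) * (B.image fun a => a + 1)) ≤ K) :
    (N + 1) ^ 2 * N ≤ 2 * (K * (2 * m)) ^ 2 := by
  obtain ⟨c, hc, hcB, hlt⟩ := exists_monotone_enumeration hB
  set T := B * B
  set U := (B.image fun a => a + 1) * (B.image fun a => a + 1)
  let P : ℝ × ℝ → ℕ → Prop := fun p i =>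
    |rankIn T (p.1 * c (i + 1)) - rankIn T (p.1 * c i)| < m ∧
    |rankIn U ((p.2 + 1) * (c (i + 1) + 1)) - rankIn U ((p.2 + 1) * (c i + 1))| < m
  classical
  have hgood : ∀ p : ℝ × ℝ, N ≤ 2 * #{i ∈ range N | P p i} := by
    intro p
    have h₁ := four_mul_card_jumps_le hK hm hmN hc p.1
    have h₂ := four_mul_card_jumps_le hK' hm hmN (c := fun i => c i + 1)
      (fun i j hij => add_le_add_left (hc hij) 1) (p.2 + 1)
    have h₃ : range N ⊆ {i ∈ range N | P p i} ∪
        ({i ∈ range N | (m : ℤ) ≤ |rankIn T (p.1 * c (i + 1)) - rankIn T (p.1 * c i)|} ∪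
        {i ∈ range N | (m : ℤ) ≤
          |rankIn U ((p.2 + 1) * (c (i + 1) + 1)) - rankIn U ((p.2 + 1) * (c i + 1))|}) := by
      intro i hi
      simp only [mem_union, mem_filter, hi, true_and, P, ← not_lt]
      tauto
    have h₄ := (card_le_card h₃).trans ((card_union_le _ _).trans
      (Nat.add_le_add_left (card_union_le _ _) _))
    rw [card_range] at h₄
    omega
  have hlower : (N + 1) ^ 2 * N ≤ 2 * #((B ×ˢ B).sigma fun p => {i ∈ range N | P p i}) := by
    rw [card_sigma, mul_sum]
    calc (N + 1) ^ 2 * N = ∑ _p ∈ B ×ˢ B, N := by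
          rw [sum_const, card_product, hB, smul_eq_mul, sq]
      _ ≤ _ := sum_le_sum fun p _ => hgood p
  have hupper : #((B ×ˢ B).sigma fun p => {i ∈ range N | P p i}) ≤
      #(closePairs T m ×ˢ closePairs U m) := by
    refine card_le_card_of_injOn (fun s => ((s.1.1 * c s.2, s.1.1 * c (s.2 + 1)),
      ((s.1.2 + 1) * (c s.2 + 1), (s.1.2 + 1) * (c (s.2 + 1) + 1)))) ?_ ?_
    · rintro ⟨⟨a, b⟩, i⟩ hs
      simp only [coe_sigma, Set.mem_sigma_iff, mem_coe, mem_product, mem_filter, P] at hs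
      obtain ⟨⟨ha, hb⟩, -, h₁, h₂⟩ := hs
      have hU : ∀ j, (b + 1) * (c j + 1) ∈ U := fun j =>
        mul_mem_mul (mem_image_of_mem _ hb) (mem_image_of_mem _ (hcB j))
      simp only [mem_coe, mem_product, closePairs, mem_filter]
      exact ⟨⟨⟨mul_mem_mul ha (hcB _), mul_mem_mul ha (hcB _)⟩, h₁⟩, ⟨hU _, hU _⟩, h₂⟩
    · rintro ⟨⟨a, b⟩, i⟩ hs ⟨⟨a', b'⟩, j⟩ ht h
      simp only [coe_sigma, Set.mem_sigma_iff, mem_coe, mem_product, mem_filter, mem_range]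
        at hs ht
      obtain ⟨⟨ha, hb⟩, hi, -⟩ := hs
      obtain ⟨⟨ha', -⟩, hj, -⟩ := ht
      simp only [Prod.mk.injEq] at h
      obtain ⟨⟨e₁, e₂⟩, e₃, e₄⟩ := h
      have hne : ∀ x ∈ B, x ≠ 0 := fun x hx e => h0 (e ▸ hx)
      have hne' : ∀ x ∈ B, x + 1 ≠ 0 := fun x hx e => h1 (eq_neg_of_add_eq_zero_left e ▸ hx)
      obtain ⟨rfl, hbb, hij⟩ := dilations_injective (hne a ha) (hne' b hb) (hne a' ha')
        (hlt i hi).ne e₁ e₂ e₃ e₄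
      obtain rfl := add_right_cancel hbb
      obtain rfl : i = j := by
        rcases lt_trichotomy i j with hlt' | hlt' | hlt'
        · exact absurd hij ((hlt i hi).trans_le (hc hlt')).ne
        · exact hlt'
        · exact absurd hij ((hlt j hj).trans_le (hc hlt')).ne'
      rfl
  rw [card_product] at hupper
  have hT := (card_closePairs_le T m).trans (Nat.mul_le_mul_right (2 * m) hK)
  have hU := (card_closePairs_le U m).trans (Nat.mul_le_mul_right (2 * m) hK')
  calc (N + 1) ^ 2 * N ≤ 2 * (#(closePairs T m) * #(closePairs U m)) := by omega
    _ ≤ 2 * (K * (2 * m) * (K * (2 * m))) := by gcongr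
    _ = 2 * (K * (2 * m)) ^ 2 := by ring

lemma pow_five_le_of_card_eq {B : Finset ℝ} (h0 : (0 : ℝ) ∉ B) (h1 : (-1 : ℝ) ∉ B) {N K : ℕ}
    (hB : #B = N + 1) (hK : #(B * B) ≤ K)
    (hK' : #((B.image fun a => a + 1) * (B.image fun a => a + 1)) ≤ K) :
    N ^ 5 ≤ 200 * K ^ 4 := by
  rcases Nat.eq_zero_or_pos N with rfl | hN
  · simp
  have hBK : N + 1 ≤ K := by
    obtain ⟨b, hb⟩ : B.Nonempty := card_pos.1 (by omega)
    rw [← hB]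
    refine (card_le_card_of_injOn (fun x => b * x) (fun x hx => mul_mem_mul hb hx) ?_).trans hK
    exact (mul_right_injective₀ fun e => h0 (e ▸ hb)).injOn
  set m := 4 * K / N + 1
  have hlow : 4 * K ≤ m * N := by
    have := Nat.lt_div_mul_add (a := 4 * K) hN
    rw [add_mul, one_mul]
    exact this.le
  have hhigh : m * N ≤ 5 * K := by
    have := Nat.div_mul_le_self (4 * K) N
    rw [add_mul, one_mul]
    omega
  have key := card_sq_mul_le h0 h1 hB (Nat.succ_pos _) hlow hK hK'
  calc N ^ 5 = N ^ 2 * N * N ^ 2 := by ring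
    _ ≤ (N + 1) ^ 2 * N * N ^ 2 := by gcongr; omega
    _ ≤ 2 * (K * (2 * m)) ^ 2 * N ^ 2 := by gcongr
    _ = 8 * K ^ 2 * (m * N) ^ 2 := by ring
    _ ≤ 8 * K ^ 2 * (5 * K) ^ 2 := by gcongr
    _ = 200 * K ^ 4 := by ring

lemma card_pow_five_le {A : Finset ℝ} {K : ℕ} (hK : #(A * A) ≤ K)
    (hK' : #((A.image fun a => a + 1) * (A.image fun a => a + 1)) ≤ K) :
    #A ^ 5 ≤ 32 ^ 4 * K ^ 4 := by
  rcases A.eq_empty_or_nonempty with rfl | hA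
  · simp
  rcases le_or_gt #A 3 with hsmall | hlarge
  · have hKpos : 1 ≤ K := (card_pos.2 (hA.mul hA)).trans_le hK
    calc #A ^ 5 ≤ 3 ^ 5 := by gcongr
      _ ≤ 32 ^ 4 * 1 ^ 4 := by norm_num
      _ ≤ 32 ^ 4 * K ^ 4 := by gcongr
  · set B := (A.erase 0).erase (-1)
    have hBA : B ⊆ A := (erase_subset _ _).trans (erase_subset _ _)
    have hcard : #A ≤ #B + 2 := by
      have h₁ := pred_card_le_card_erase (s := A) (a := 0)
      have h₂ := pred_card_le_card_erase (s := A.erase 0) (a := -1)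
      change _ ≤ #B at h₂
      omega
    obtain ⟨N, hN⟩ : ∃ N, #B = N + 1 := ⟨#B - 1, by omega⟩
    have him := image_subset_image (f := fun a : ℝ => a + 1) hBA
    have key := pow_five_le_of_card_eq (B := B) (by simp [B]) (by simp [B]) hN
      ((card_le_card (mul_subset_mul hBA hBA)).trans hK)
      ((card_le_card (mul_subset_mul him him)).trans hK')
    calc #A ^ 5 ≤ (4 * N) ^ 5 := by gcongr; omega
      _ = 1024 * N ^ 5 := by ring
      _ ≤ 1024 * (200 * K ^ 4) := by gcongr
      _ ≤ 32 ^ 4 * K ^ 4 := by omega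

theorem garaev_shen :
    ∃ c : ℝ, 0 < c ∧ ∀ A : Finset ℝ,
      c * (A.card : ℝ) ^ (5 / 4 : ℝ) ≤
        max ((A * A).card : ℝ)
          (((A.image fun a => a + 1) * (A.image fun a => a + 1)).card : ℝ) := by
  refine ⟨1 / 32, by norm_num, fun A => ?_⟩
  rw [← Nat.cast_max]
  set K := max #(A * A) #((A.image fun a => a + 1) * (A.image fun a => a + 1))
  have key : (#A : ℝ) ^ 5 ≤ 32 ^ 4 * (K : ℝ) ^ 4 := by
    exact_mod_cast card_pow_five_le (le_max_left _ _) (le_max_right _ _)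
  have hpow : ((#A : ℝ) ^ (5 / 4 : ℝ)) ^ 4 = (#A : ℝ) ^ 5 := by
    rw [← Real.rpow_natCast, ← Real.rpow_mul (by positivity), ← Real.rpow_natCast]
    norm_num
  have h : (#A : ℝ) ^ (5 / 4 : ℝ) ≤ 32 * K := by
    refine le_of_pow_le_pow_left₀ (n := 4) (by norm_num) (by positivity) ?_
    rw [hpow, mul_pow]
    exact key
  linarith
end
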